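/- arXiv:1209.5840 — 2 statements merged into one kernel-verified Lean document; each statement's English description precedes it below -/
import Mathlib

section
/- Let Ω ⊆ ℝⁿ (n ≥ 2) be a domain whose closure is an n-set and whose boundary ∂Ω is a d-set with n−1 < d < n, let 1 < p < ∞, 1 ≤ q < ∞ and s > (n−d)/p. Then there is a constant C such that: for every f ∈ L^p(Ω) for which there exists a sequence f_j ∈ C_c^∞(Ω) with ‖f − f_j‖_{F^s_{pq}(Ω)} → 0 (where ‖h‖_{F^s_{pq}(Ω)} := inf{ ‖g‖_{F^s_{pq}(ℝⁿ)} : g ∈ F^s_{pq}(ℝⁿ), g = h a.e. on Ω }), there exists g ∈ F^s_{pq}(ℝⁿ) with g = f a.e. on Ω, supp g ⊆ closure(Ω), and ‖g‖_{F^s_{pq}(ℝⁿ)} ≤ C ‖f‖_{F^s_{pq}(Ω)}. -/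
open MeasureTheory Metric Set Filter
open scoped ENNReal NNReal Topology

noncomputable section

/-- ℝⁿ, with the sup-norm (given by the product metric on `Fin n → ℝ`). -/
abbrev Rn (n : ℕ) := Fin n → ℝ

/-- `S` is an (Ahlfors) `d`-set with regularity constant `C`. -/
def IsDSet {n : ℕ} (S : Set (Rn n)) (d C : ℝ) : Prop :=
  IsClosed S ∧ 1 < C ∧ ∀ w ∈ S, ∀ r : ℝ, 0 < r → r ≤ 1 →
    ENNReal.ofReal (C⁻¹ * r ^ d) ≤ μH[d] (closedBall w r ∩ S) ∧
      μH[d] (closedBall w r ∩ S) ≤ ENNReal.ofReal (C * r ^ d)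

/-- The normalized local best approximation `ℰ_k(f, Q(x,r))_{L^u}`. -/
def localApprox {n : ℕ} (k : ℕ) (u : ℝ) (f : Rn n → ℝ) (x : Rn n) (r : ℝ) : ℝ≥0∞ :=
  ⨅ (P : MvPolynomial (Fin n) ℝ) (_ : P.totalDegree ≤ k - 1),
    ((volume (closedBall x r))⁻¹ *
      ∫⁻ y in closedBall x r, ENNReal.ofReal |f y - MvPolynomial.eval y P| ^ u) ^ (1 / u)

/-- The Triebel–Lizorkin norm `‖f‖_{F^s_{pq}(ℝⁿ)}` (with `k = [s]+1`). -/
def tlNorm {n : ℕ} (s p q : ℝ) (f : Rn n → ℝ) : ℝ≥0∞ :=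
  (∫⁻ x, ENNReal.ofReal |f x| ^ p) ^ (1 / p) +
  (∫⁻ x, ((∫⁻ t in Set.Ioo (0:ℝ) 1,
      (ENNReal.ofReal (t ^ (-s)) * localApprox (⌊s⌋₊ + 1) 1 f x t) ^ q
        * ENNReal.ofReal t⁻¹) ^ (1 / q)) ^ p) ^ (1 / p)

/-- The quotient norm `‖h‖_{F^s_{pq}(Ω)} = inf {‖g‖_{F^s_{pq}(ℝⁿ)} : g = h a.e. on Ω}`. -/
def tlNormOn {n : ℕ} (Ω : Set (Rn n)) (s p q : ℝ) (h : Rn n → ℝ) : ℝ≥0∞ :=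
  ⨅ (g : Rn n → ℝ) (_ : Measurable g) (_ : ∀ᵐ x ∂volume.restrict Ω, g x = h x),
    tlNorm s p q g

lemma poly_strictDeriv {n : ℕ} (P : MvPolynomial (Fin n) ℝ) (x : Rn n) :
    HasStrictFDerivAt (fun y : Rn n => MvPolynomial.eval y P)
      (∑ i, (MvPolynomial.eval x (MvPolynomial.pderiv i P)) •
        (ContinuousLinearMap.proj i : Rn n →L[ℝ] ℝ)) x := by
  induction P using MvPolynomial.induction_on with
  | C a => simpa using hasStrictFDerivAt_const a x
  | add p q hp hq =>
    have := hp.add hq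
    simp only [map_add, add_smul, Finset.sum_add_distrib]
    exact this
  | mul_X p i hp =>
    have h2 : HasStrictFDerivAt (fun y : Rn n => y i)
      (ContinuousLinearMap.proj i : Rn n →L[ℝ] ℝ) x :=
      (ContinuousLinearMap.proj i : Rn n →L[ℝ] ℝ).hasStrictFDerivAt
    have := hp.mul h2
    have e : (fun y : Rn n => MvPolynomial.eval y (p * MvPolynomial.X i)) =
        (fun y : Rn n => MvPolynomial.eval y p * y i) := by
      funext y; simp
    rw [e]
    refine this.congr_fderiv ?_
    symm
    simp only [MvPolynomial.pderiv_mul, MvPolynomial.pderiv_X, map_add, map_mul,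
      MvPolynomial.eval_X, add_smul, Finset.sum_add_distrib, Finset.smul_sum, smul_smul]
    rw [add_comm]
    congr 1
    · rw [Finset.sum_eq_single i]
      · simp
      · intro b _ hb; simp [Pi.single_apply, hb.symm]
      · simp
    · refine Finset.sum_congr rfl fun j _ => by rw [mul_comm]

lemma exists_pderiv {n : ℕ} (P : MvPolynomial (Fin n) ℝ) (h : 0 < P.totalDegree) :
    ∃ i, MvPolynomial.pderiv i P ≠ 0 ∧ (MvPolynomial.pderiv i P).totalDegree < P.totalDegree := by
  have hP : P ≠ 0 := by rintro rfl; simp at h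
  obtain ⟨m, hm, hmd⟩ := Finset.exists_mem_eq_sup P.support (MvPolynomial.support_nonempty.2 hP)
    (fun s => s.sum fun _ e => e)
  have hmd' : P.totalDegree = m.sum fun _ e => e := hmd
  have : m ≠ 0 := by rintro rfl; simp at hmd'; omega
  obtain ⟨i, hi⟩ := Finsupp.ne_iff.1 this
  simp at hi
  refine ⟨i, ?_, ?_⟩
  · intro h0
    have := MvPolynomial.coeff_pderiv (i := i) P (m - Finsupp.single i 1)
    rw [h0] at this
    have e : m - Finsupp.single i 1 + Finsupp.single i 1 = m := by
      apply tsub_add_cancel_of_le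
      simp; omega
    rw [e] at this
    simp at this
    rcases this with h | h
    · exact (MvPolynomial.mem_support_iff.1 hm) h
    · exact absurd h (by positivity)
  · suffices (MvPolynomial.pderiv i P).totalDegree ≤ P.totalDegree - 1 by omega
    refine Finset.sup_le fun b hb => ?_
    rw [MvPolynomial.mem_support_iff, MvPolynomial.coeff_pderiv] at hb
    have h1 : b + Finsupp.single i 1 ∈ P.support := by
      rw [MvPolynomial.mem_support_iff]; intro h; simp [h] at hb
    have := MvPolynomial.le_totalDegree h1
    rw [Finsupp.sum_add_index' (by simp) (by simp)] at this
    simp at this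
    have e : (b.sum fun _ e => e) = b.degree := rfl
    try rw [e]
    try rw [e] at this
    omega

lemma dimH_regular {N : ℕ} (P : MvPolynomial (Fin (N+1)) ℝ) (i : Fin (N+1)) :
    dimH {x : Rn (N+1) | MvPolynomial.eval x P = 0 ∧
      MvPolynomial.eval x (MvPolynomial.pderiv i P) ≠ 0} ≤ N := by
  by_contra hcon
  push Not at hcon
  obtain ⟨x, hx, ht⟩ := exists_mem_nhdsWithin_lt_dimH_of_lt_dimH hcon
  obtain ⟨hx0, hxi⟩ := hx
  set Z : Set (Rn (N+1)) := {x : Rn (N+1) | MvPolynomial.eval x P = 0 ∧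
      MvPolynomial.eval x (MvPolynomial.pderiv i P) ≠ 0} with hZ
  set a : Fin (N+1) → ℝ := fun j => MvPolynomial.eval x (MvPolynomial.pderiv j P) with ha
  have hd := poly_strictDeriv P x
  have hlo := (hd.isLittleO).def (c := |a i| / 2) (by positivity)
  obtain ⟨U, hU, V, hV, hUV⟩ := Filter.mem_prod_iff.1 (show _ ∈ 𝓝 x ×ˢ 𝓝 x by rw [← nhds_prod_eq]; exact hlo)
  set W := U ∩ V ∩ Z
  have hW : W ∈ 𝓝[Z] x := by
    exact Filter.inter_mem (mem_nhdsWithin_of_mem_nhds (Filter.inter_mem hU hV)) self_mem_nhdsWithin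
  have key : ∀ y ∈ W, ∀ z ∈ W, ‖y - z‖ ≤
      (2 + 2 * (∑ j, |a (i.succAbove j)|) / |a i|) * ‖i.removeNth y - i.removeNth z‖ := by
    intro y hy z hz
    have hai : 0 < |a i| := abs_pos.2 hxi
    have h1 := @hUV (y, z) ⟨hy.1.1, hz.1.2⟩
    simp only [mem_ofPred_eq, hy.2.1, hz.2.1] at h1
    set ρ := ‖i.removeNth y - i.removeNth z‖ with hρ
    have hρ0 : 0 ≤ ρ := norm_nonneg _
    have hj : ∀ j, |y (i.succAbove j) - z (i.succAbove j)| ≤ ρ := fun j =>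
      norm_le_pi_norm (i.removeNth y - i.removeNth z) j
    have hnorm : ‖y - z‖ ≤ |y i - z i| + ρ := by
      rw [pi_norm_le_iff_of_nonneg (by positivity)]
      intro j
      rcases Fin.eq_self_or_eq_succAbove i j with rfl | ⟨k, rfl⟩
      · simp [hρ0]
      · have := hj k
        simp only [Pi.sub_apply, Real.norm_eq_abs]
        linarith [abs_nonneg (y i - z i)]
    have h2 : |∑ j, a j * (y j - z j)| ≤ |a i| / 2 * ‖y - z‖ := by
      have : ‖(0:ℝ) - 0 - (∑ j, a j • (ContinuousLinearMap.proj j : Rn (N+1) →L[ℝ] ℝ)) (y - z)‖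
        ≤ |a i| / 2 * ‖y - z‖ := h1
      simpa [_root_.sum_apply] using this
    rw [Fin.sum_univ_succAbove _ i] at h2
    have h3 : |∑ j, a (i.succAbove j) * (y (i.succAbove j) - z (i.succAbove j))| ≤
        (∑ j, |a (i.succAbove j)|) * ρ := by
      rw [Finset.sum_mul]
      refine (Finset.abs_sum_le_sum_abs _ _).trans (Finset.sum_le_sum fun j _ => ?_)
      rw [abs_mul]
      exact mul_le_mul_of_nonneg_left (hj j) (abs_nonneg _)
    have h4 : |a i| * |y i - z i| ≤ |a i| / 2 * ‖y - z‖ + (∑ j, |a (i.succAbove j)|) * ρ := by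
      rw [← abs_mul]
      have := abs_sub_abs_le_abs_add (a i * (y i - z i))
        (∑ j, a (i.succAbove j) * (y (i.succAbove j) - z (i.succAbove j)))
      linarith
    have h5 : |a i| * |y i - z i| ≤ |a i| / 2 * (|y i - z i| + ρ) +
        (∑ j, |a (i.succAbove j)|) * ρ := by
      refine h4.trans ?_
      gcongr
    have h6 : |y i - z i| ≤ ρ + 2 * (∑ j, |a (i.succAbove j)|) / |a i| * ρ := by
      rw [← mul_le_mul_iff_right₀ hai]
      have : |a i| * (ρ + 2 * (∑ j, |a (i.succAbove j)|) / |a i| * ρ) =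
        |a i| * ρ + 2 * (∑ j, |a (i.succAbove j)|) * ρ := by field_simp
      rw [this]; linarith
    linarith
  have hK : (0:ℝ) ≤ (2 + 2 * (∑ j, |a (i.succAbove j)|) / |a i|) :=
    add_nonneg zero_le_two (div_nonneg (mul_nonneg zero_le_two
      (Finset.sum_nonneg fun j _ => abs_nonneg _)) (abs_nonneg _))
  clear_value a
  have hanti : AntilipschitzWith (2 + 2 * (∑ j, |a (i.succAbove j)|) / |a i|).toNNReal
      (fun y : W => (i.removeNth (y : Rn (N+1)) : Fin N → ℝ)) := by
    refine AntilipschitzWith.of_le_mul_dist fun y z => ?_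
    rw [Real.coe_toNNReal _ hK, Subtype.dist_eq, dist_eq_norm, dist_eq_norm]
    exact key y y.2 z z.2
  have h7 := hanti.le_dimH_image univ
  have h8 : dimH W ≤ N := by
    have : dimH W = dimH (univ : Set W) := by
      rw [← (isometry_subtype_coe (s := W)).dimH_image univ]; simp
    rw [this]
    refine h7.trans ((dimH_mono (subset_univ _)).trans ?_)
    exact (Real.dimH_univ_pi_fin N).le
  exact absurd (ht W hW) (not_lt.2 h8)

lemma dimH_zeros {N : ℕ} (P : MvPolynomial (Fin (N+1)) ℝ) (hP : P ≠ 0) :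
    dimH {x : Rn (N+1) | MvPolynomial.eval x P = 0} ≤ N := by
  induction h : P.totalDegree using Nat.strong_induction_on generalizing P with
  | _ k ih =>
    rcases Nat.eq_zero_or_pos P.totalDegree with h0 | h0
    · rw [MvPolynomial.totalDegree_eq_zero_iff_eq_C] at h0
      have : MvPolynomial.coeff 0 P ≠ 0 := by
        intro h1; rw [h1] at h0; simp at h0; exact hP h0
      have e : {x : Rn (N+1) | MvPolynomial.eval x P = 0} = ∅ := by
        ext x; rw [h0]; simpa using this
      simp [e]
    · obtain ⟨i, hi, hlt⟩ := exists_pderiv P h0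
      have h1 := ih _ (h ▸ hlt) _ hi rfl
      have h2 := dimH_regular P i
      refine (dimH_mono (t := _ ∪ _) ?_).trans ((dimH_union _ _).trans_le (max_le h2 h1))
      intro x hx
      by_cases hh : MvPolynomial.eval x (MvPolynomial.pderiv i P) = 0
      · exact Or.inr hh
      · exact Or.inl ⟨hx, hh⟩

lemma cover_null {n : ℕ} {d : ℝ} (hd : 0 < d) (Z : Set (Rn n)) (hZ : μH[d] Z = 0)
    {κ : ℝ≥0∞} (hκ : κ ≠ 0) :
    ∃ U : Set (Rn n), IsOpen U ∧ Z ⊆ U ∧ ∀ (K : ℝ≥0∞) (μ : Measure (Rn n)),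
      (∀ x, ∀ r : ℝ, 0 < r → r ≤ 1 → μ (closedBall x r) ≤ K * ENNReal.ofReal (r ^ d)) →
      μ U ≤ K * κ := by
  rw [Measure.hausdorffMeasure_apply] at hZ
  have hκ2 : 0 < κ / 2 := by simpa [ENNReal.div_pos_iff] using hκ
  have h1 : (⨅ (t : ℕ → Set (Rn n)) (_ : Z ⊆ ⋃ n, t n) (_ : ∀ n, ediam (t n) ≤ 1/2),
      ∑' n, ⨆ _ : (t n).Nonempty, ediam (t n) ^ d) < κ / 2 := by
    refine lt_of_le_of_lt ?_ hκ2
    rw [← hZ]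
    exact le_iSup₂_of_le (1/2 : ℝ≥0∞) (by simp) le_rfl
  simp only [iInf_lt_iff] at h1
  obtain ⟨t, hZt, htd, hsum⟩ := h1
  obtain ⟨ε, hε, hεs⟩ := ENNReal.exists_pos_sum_of_countable hκ2.ne' ℕ
  have hr : ∀ k, (t k).Nonempty → ∃ r : ℝ, 0 < r ∧ r ≤ 1 ∧ (ediam (t k)).toReal < r ∧
      ENNReal.ofReal (r ^ d) ≤ ediam (t k) ^ d + ε k := by
    intro k hk
    set D := (ediam (t k)).toReal with hD
    have hDt : ediam (t k) ≠ ⊤ := ne_top_of_le_ne_top (by simp) (htd k)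
    have hD1 : D < 1 := by
      have : D ≤ (1/2 : ℝ≥0∞).toReal := ENNReal.toReal_mono (by simp) (htd k)
      norm_num at this
      linarith
    have hcont : Tendsto (fun r : ℝ => ENNReal.ofReal (r ^ d)) (𝓝[>] D) (𝓝 (ENNReal.ofReal (D ^ d))) := by
      refine ((ENNReal.continuous_ofReal.comp (Real.continuous_rpow_const hd.le)).tendsto D).mono_left
        nhdsWithin_le_nhds
    have hlt : ENNReal.ofReal (D ^ d) < ediam (t k) ^ d + ε k := by
      have : ENNReal.ofReal (D ^ d) = ediam (t k) ^ d := by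
        rw [← ENNReal.ofReal_rpow_of_nonneg ENNReal.toReal_nonneg hd.le, ENNReal.ofReal_toReal hDt]
      rw [this]
      exact ENNReal.lt_add_right (ENNReal.rpow_ne_top_of_nonneg hd.le hDt) (by simpa using (hε k).ne')
    have h2 := (hcont.eventually (eventually_lt_nhds hlt)).and (Ioo_mem_nhdsGT hD1)
    obtain ⟨r, hr1, hr2⟩ := h2.exists
    exact ⟨r, lt_of_le_of_lt ENNReal.toReal_nonneg hr2.1, hr2.2.le, hr2.1, hr1.le⟩
  choose! r hr0 hr1 hrD hrle using hr
  have hx : ∀ k, (t k).Nonempty → ∃ x, x ∈ t k := fun k hk => hk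
  choose! x hx using hx
  refine ⟨⋃ k, ⋃ _ : (t k).Nonempty, ball (x k) (r k), ?_, ?_, ?_⟩
  · exact isOpen_iUnion fun k => isOpen_iUnion fun _ => isOpen_ball
  · intro z hz
    obtain ⟨k, hk⟩ := mem_iUnion.1 (hZt hz)
    refine mem_iUnion.2 ⟨k, mem_iUnion.2 ⟨⟨z, hk⟩, ?_⟩⟩
    rw [mem_ball]
    refine lt_of_le_of_lt ?_ (hrD k ⟨z, hk⟩)
    rw [dist_edist]
    exact ENNReal.toReal_mono (ne_top_of_le_ne_top (by simp) (htd k)) (edist_le_ediam_of_mem hk (hx k ⟨z, hk⟩))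
  · intro K μ hμ
    calc μ (⋃ k, ⋃ _ : (t k).Nonempty, ball (x k) (r k))
        ≤ ∑' k, μ (⋃ _ : (t k).Nonempty, ball (x k) (r k)) := measure_iUnion_le _
      _ ≤ ∑' k, K * ((⨆ _ : (t k).Nonempty, ediam (t k) ^ d) + ε k) := by
        refine ENNReal.tsum_le_tsum fun k => ?_
        by_cases hk : (t k).Nonempty
        · simp only [hk, iUnion_true, iSup_pos]
          exact (measure_mono ball_subset_closedBall).trans
            ((hμ _ _ (hr0 k hk) (hr1 k hk)).trans (mul_le_mul_right (hrle k hk) K))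
        · simp [hk]
      _ = K * ((∑' k, ⨆ _ : (t k).Nonempty, ediam (t k) ^ d) + ∑' k, (ε k : ℝ≥0∞)) := by
        rw [ENNReal.tsum_mul_left, ENNReal.tsum_add]
      _ ≤ K * κ := by
        gcongr
        rw [← ENNReal.add_halves κ]
        exact add_le_add hsum.le hεs.le

lemma totalDegree_affine {n : ℕ} (P : MvPolynomial (Fin n) ℝ) (w : Rn n) (t : ℝ) :
    ∃ P' : MvPolynomial (Fin n) ℝ, P'.totalDegree ≤ P.totalDegree ∧
      ∀ y, MvPolynomial.eval y P' = MvPolynomial.eval (fun i => w i + t * y i) P := by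
  refine ⟨MvPolynomial.bind₁ (fun i => MvPolynomial.C (w i) + MvPolynomial.C t * MvPolynomial.X i) P,
    ?_, ?_⟩
  · rw [MvPolynomial.bind₁, MvPolynomial.aeval_def, MvPolynomial.eval₂_eq]
    refine MvPolynomial.totalDegree_finsetSum_le fun b hb => ?_
    refine (MvPolynomial.totalDegree_mul _ _).trans ?_
    have h1 : (∏ i ∈ b.support, (MvPolynomial.C (w i) + MvPolynomial.C t * MvPolynomial.X i :
        MvPolynomial (Fin n) ℝ) ^ b i).totalDegree ≤ ∑ i ∈ b.support, b i := by
      refine (MvPolynomial.totalDegree_finsetProd _ _).trans (Finset.sum_le_sum fun i _ => ?_)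
      refine (MvPolynomial.totalDegree_pow _ _).trans ?_
      have : (MvPolynomial.C (w i) + MvPolynomial.C t * MvPolynomial.X i :
        MvPolynomial (Fin n) ℝ).totalDegree ≤ 1 := by
        refine (MvPolynomial.totalDegree_add _ _).trans (max_le (by simp) ?_)
        refine (MvPolynomial.totalDegree_mul _ _).trans ?_
        simp
      nlinarith
    have h2 := MvPolynomial.le_totalDegree hb
    have h3 : (b.sum fun _ e => e) = ∑ i ∈ b.support, b i := rfl
    have h4 : (algebraMap ℝ (MvPolynomial (Fin n) ℝ) (MvPolynomial.coeff b P)).totalDegree = 0 := by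
      rw [MvPolynomial.algebraMap_eq]; simp
    omega
  · intro y
    induction P using MvPolynomial.induction_on with
    | C a => simp
    | add p q hp hq => simp only [map_add, hp, hq]
    | mul_X p i hp => simp only [map_mul, hp, MvPolynomial.bind₁_X_right, map_add,
        MvPolynomial.eval_C, MvPolynomial.eval_X]

def goodM {n : ℕ} (d : ℝ) (K : ℝ≥0∞) (w : Rn n) (t : ℝ) (μ : Measure (Rn n)) : Prop :=
  (∀ x, ∀ r : ℝ, 0 < r → r ≤ t → μ (closedBall x r) ≤ K * ENNReal.ofReal (r ^ d)) ∧
    ENNReal.ofReal (t ^ d) ≤ K * μ (closedBall w t)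

lemma poly_cont {n : ℕ} (P : MvPolynomial (Fin n) ℝ) :
    Continuous (fun y : Rn n => MvPolynomial.eval y P) := MvPolynomial.continuous_eval P

def polyToC (n m : ℕ) : MvPolynomial.restrictTotalDegree (Fin n) ℝ m →ₗ[ℝ]
    C(closedBall (0 : Rn n) 1, ℝ) where
  toFun P := ⟨fun y => MvPolynomial.eval (y : Rn n) P.1, (poly_cont P.1).comp continuous_subtype_val⟩
  map_add' P Q := by ext; simp
  map_smul' a P := by ext; simp

lemma markov_unit (N m : ℕ) {d : ℝ} (hd : N < d) (K : ℝ≥0∞) (hK : K ≠ ⊤) :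
    ∃ C : ℝ≥0, ∀ μ : Measure (Rn (N+1)), goodM d K 0 1 μ →
      ∀ P : MvPolynomial (Fin (N+1)) ℝ, P.totalDegree ≤ m → ∀ y ∈ closedBall (0 : Rn (N+1)) 1,
        ‖MvPolynomial.eval y P‖ₑ ≤
          C * ∫⁻ z in closedBall (0 : Rn (N+1)) 1, ‖MvPolynomial.eval z P‖ₑ ∂μ := by
  set B := closedBall (0 : Rn (N+1)) 1 with hB
  have hd0 : 0 < d := lt_of_le_of_lt (Nat.cast_nonneg N) hd
  set L := polyToC (N+1) m with hL
  set V := LinearMap.range L with hV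
  have : CompactSpace B := isCompact_iff_compactSpace.1 (isCompact_closedBall _ _)
  have : FiniteDimensional ℝ V := inferInstance
  have hcomp : IsCompact (sphere (0 : V) 1) := isCompact_sphere _ _
  have main : ∃ C : ℝ≥0, ∀ μ : Measure (Rn (N+1)), goodM d K 0 1 μ → ∀ P,
      (⟨L P, LinearMap.mem_range_self L P⟩ : V) ∈ sphere (0 : V) 1 →
      1 ≤ C * ∫⁻ z in B, ‖MvPolynomial.eval z P.1‖ₑ ∂μ := by
    refine hcomp.induction_on (p := fun s => ∃ C : ℝ≥0, ∀ μ : Measure (Rn (N+1)), goodM d K 0 1 μ → ∀ P,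
      (⟨L P, LinearMap.mem_range_self L P⟩ : V) ∈ s →
      1 ≤ C * ∫⁻ z in B, ‖MvPolynomial.eval z P.1‖ₑ ∂μ) ?_ ?_ ?_ ?_
    · exact ⟨0, by simp⟩
    · rintro s t hst ⟨C, hC⟩
      exact ⟨C, fun μ hμ P hP => hC μ hμ P (hst hP)⟩
    · rintro s t ⟨C, hC⟩ ⟨C', hC'⟩
      refine ⟨C + C', fun μ hμ P hP => ?_⟩
      rcases hP with hP | hP
      · exact (hC μ hμ P hP).trans (by gcongr; simp)
      · exact (hC' μ hμ P hP).trans (by gcongr; simp)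
    · rintro ⟨v, hv⟩ hvs
      obtain ⟨P, rfl⟩ := hv
      have hP0 : P.1 ≠ 0 := by
        intro h0
        have : P = 0 := Subtype.ext h0
        subst this
        simp at hvs
      have hZ0 : μH[d] {x : Rn (N+1) | MvPolynomial.eval x P.1 = 0} = 0 := by
        have := hausdorffMeasure_of_dimH_lt (d := d.toNNReal)
          (lt_of_le_of_lt (dimH_zeros P.1 hP0) (by
            rw [← ENNReal.coe_natCast, ENNReal.coe_lt_coe, ← NNReal.coe_lt_coe,
              Real.coe_toNNReal _ hd0.le]
            simpa using hd))
        rwa [Real.coe_toNNReal _ hd0.le] at this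
      obtain ⟨U, hUo, hZU, hU⟩ := cover_null hd0 _ hZ0 (κ := (2 * (K * K))⁻¹)
        (by simp [ENNReal.mul_eq_top, hK])
      have hcpt : IsCompact (B \ U) := (isCompact_closedBall _ _).diff hUo
      obtain ⟨η, hη, hηle⟩ : ∃ η : ℝ, 0 < η ∧ ∀ y ∈ B \ U, 2 * η ≤ |MvPolynomial.eval y P.1| := by
        rcases (B \ U).eq_empty_or_nonempty with he | hne
        · exact ⟨1, one_pos, by simp [he]⟩
        · obtain ⟨y, hy, hymin⟩ := hcpt.exists_isMinOn hne (poly_cont P.1).abs.continuousOn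
          refine ⟨|MvPolynomial.eval y P.1| / 2, ?_, fun z hz => ?_⟩
          · have : MvPolynomial.eval y P.1 ≠ 0 := fun h => hy.2 (hZU h)
            positivity
          · have := hymin hz
            simp only [mem_ofPred_eq] at this
            linarith
      refine ⟨ball _ η ∩ sphere 0 1, mem_nhdsWithin.2 ⟨_, isOpen_ball, mem_ball_self hη, subset_rfl⟩,
        (Real.toNNReal η)⁻¹ * (2 * K.toNNReal), fun μ hμ P' hP' => ?_⟩
      have hclose : ∀ y ∈ B, |MvPolynomial.eval y P'.1 - MvPolynomial.eval y P.1| ≤ η := by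
        intro y hy
        have h1 : ‖L P' - L P‖ < η := by
          have := hP'.1
          rw [mem_ball, dist_eq_norm] at this
          exact this
        exact (ContinuousMap.norm_coe_le_norm (L P' - L P) ⟨y, hy⟩).trans h1.le
      have hlow : ∀ y ∈ B \ U, ENNReal.ofReal η ≤ ‖MvPolynomial.eval y P'.1‖ₑ := by
        intro y hy
        rw [Real.enorm_eq_ofReal_abs]
        apply ENNReal.ofReal_le_ofReal
        have h1 := hclose y hy.1
        have h2 := hηle y hy
        have h3 := abs_sub_abs_le_abs_sub (MvPolynomial.eval y P.1) (MvPolynomial.eval y P'.1)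
        rw [abs_sub_comm] at h3
        linarith
      have hμU := hU K μ hμ.1
      have hμB : 1 ≤ K * μ B := by simpa using hμ.2
      have hK0 : K ≠ 0 := by rintro rfl; simp at hμB
      have h1 : (1:ℝ≥0∞) ≤ 2 * K * μ (B \ U) := by
        have h2 : μ B ≤ μ (B \ U) + μ U := by
          refine (measure_mono ?_).trans (measure_union_le _ _)
          intro y hy
          by_cases h : y ∈ U
          · exact Or.inr h
          · exact Or.inl ⟨hy, h⟩
        have h3 : K * (K * (2 * (K * K))⁻¹) = 2⁻¹ := by
          rw [← mul_assoc, ENNReal.mul_inv (by simp) (by simp), mul_comm, mul_assoc,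
            ENNReal.inv_mul_cancel (by simp [hK0]) (by simp [ENNReal.mul_eq_top, hK]), mul_one]
        have h4 : (1:ℝ≥0∞) ≤ K * μ (B \ U) + 2⁻¹ := by
          calc (1:ℝ≥0∞) ≤ K * (μ (B \ U) + μ U) := hμB.trans (by gcongr)
            _ ≤ K * (μ (B \ U)) + K * (K * (2 * (K * K))⁻¹) := by rw [mul_add]; gcongr
            _ = _ := by rw [h3]
        have h5 : (2⁻¹:ℝ≥0∞) ≤ K * μ (B \ U) := by
          have : (2⁻¹:ℝ≥0∞) + 2⁻¹ ≤ K * μ (B \ U) + 2⁻¹ := by rwa [ENNReal.inv_two_add_inv_two]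
          exact (ENNReal.add_le_add_iff_right (by simp)).1 this
        calc (1:ℝ≥0∞) = 2 * 2⁻¹ := (ENNReal.mul_inv_cancel (by simp) (by simp)).symm
          _ ≤ 2 * (K * μ (B \ U)) := by gcongr
          _ = _ := by rw [mul_assoc]
      have h2 : ENNReal.ofReal η * μ (B \ U) ≤ ∫⁻ z in B, ‖MvPolynomial.eval z P'.1‖ₑ ∂μ := by
        have hm : MeasurableSet (B \ U) := measurableSet_closedBall.diff hUo.measurableSet
        calc ENNReal.ofReal η * μ (B \ U) = ∫⁻ z in B \ U, ENNReal.ofReal η ∂μ := by simp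
          _ ≤ ∫⁻ z in B \ U, ‖MvPolynomial.eval z P'.1‖ₑ ∂μ := setLIntegral_mono' hm hlow
          _ ≤ _ := lintegral_mono_set sdiff_subset
      have hη' : ENNReal.ofReal η ≠ 0 := by simpa using hη
      have hcast : (((Real.toNNReal η)⁻¹ * (2 * K.toNNReal) : ℝ≥0) : ℝ≥0∞) =
          (ENNReal.ofReal η)⁻¹ * (2 * K) := by
        rw [ENNReal.coe_mul, ENNReal.coe_inv (by simpa using hη), ENNReal.coe_mul,
          ENNReal.coe_toNNReal hK]; rfl
      calc (1:ℝ≥0∞) ≤ 2 * K * μ (B \ U) := h1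
        _ = (ENNReal.ofReal η)⁻¹ * (2 * K) * (ENNReal.ofReal η * μ (B \ U)) := by
          rw [mul_comm (ENNReal.ofReal η)⁻¹, mul_assoc (2 * K), ← mul_assoc (ENNReal.ofReal η)⁻¹,
            ENNReal.inv_mul_cancel hη' (by simp), one_mul]
        _ ≤ _ := by rw [hcast]; gcongr
  obtain ⟨C, hC⟩ := main
  refine ⟨C, fun μ hμ P hP y hy => ?_⟩
  let Q : MvPolynomial.restrictTotalDegree (Fin (N+1)) ℝ m :=
    ⟨P, (MvPolynomial.mem_restrictTotalDegree _ _ _).2 hP⟩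
  have hle : ‖MvPolynomial.eval y P‖ ≤ ‖L Q‖ := ContinuousMap.norm_coe_le_norm (L Q) ⟨y, hy⟩
  rcases eq_or_ne ‖L Q‖ 0 with h0 | h0
  · rw [h0] at hle
    have : MvPolynomial.eval y P = 0 := norm_le_zero_iff.1 hle
    simp [this]
  · have h1 := hC μ hμ (‖L Q‖⁻¹ • Q) (by
      simp only [mem_sphere, dist_zero_right, map_smul]
      change ‖‖L Q‖⁻¹ • L Q‖ = 1
      rw [norm_smul, norm_inv, norm_norm, inv_mul_cancel₀ h0])
    have h2 : ∫⁻ z in B, ‖MvPolynomial.eval z (‖L Q‖⁻¹ • Q).1‖ₑ ∂μ =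
        ‖L Q‖ₑ⁻¹ * ∫⁻ z in B, ‖MvPolynomial.eval z P‖ₑ ∂μ := by
      rw [← lintegral_const_mul _ (poly_cont P).enorm.measurable]
      refine lintegral_congr fun z => ?_
      have : MvPolynomial.eval z (‖L Q‖⁻¹ • Q).1 = ‖L Q‖⁻¹ * MvPolynomial.eval z P := by
        simp [Q]
      rw [this, enorm_mul, enorm_inv h0, enorm_norm]
    rw [h2] at h1
    have h3 : ‖L Q‖ₑ ≠ 0 := by
      rw [← ofReal_norm, Ne, ENNReal.ofReal_eq_zero, not_le]
      exact lt_of_le_of_ne (norm_nonneg _) (Ne.symm h0)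
    calc ‖MvPolynomial.eval y P‖ₑ ≤ ‖L Q‖ₑ := enorm_le_iff_norm_le.2 hle
      _ ≤ ‖L Q‖ₑ * (C * (‖L Q‖ₑ⁻¹ * ∫⁻ z in B, ‖MvPolynomial.eval z P‖ₑ ∂μ)) := by
        conv_lhs => rw [← mul_one ‖L Q‖ₑ]
        gcongr
      _ = _ := by
        rw [mul_left_comm, ← mul_assoc ‖L Q‖ₑ, ENNReal.mul_inv_cancel h3 (by simp), one_mul]

lemma markov (N m : ℕ) {d : ℝ} (hd : N < d) (K : ℝ≥0∞) (hK : K ≠ ⊤) :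
    ∃ C : ℝ≥0, ∀ (μ : Measure (Rn (N+1))) (w : Rn (N+1)) (t : ℝ), 0 < t → goodM d K w t μ →
      ∀ P : MvPolynomial (Fin (N+1)) ℝ, P.totalDegree ≤ m → ∀ y ∈ closedBall w t,
        ‖MvPolynomial.eval y P‖ₑ ≤
          C * ((ENNReal.ofReal (t ^ d))⁻¹ * ∫⁻ z in closedBall w t, ‖MvPolynomial.eval z P‖ₑ ∂μ) := by
  obtain ⟨C, hC⟩ := markov_unit N m hd K hK
  refine ⟨C, fun μ w t ht hμ P hP y hy => ?_⟩
  set h : Rn (N+1) → Rn (N+1) := fun z => t⁻¹ • (z - w) with hh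
  have hm : Measurable h := by fun_prop
  have hpre : ∀ x r, h ⁻¹' (closedBall x r) = closedBall (w + t • x) (t * r) := by
    intro x r
    ext z
    simp only [mem_preimage, mem_closedBall, dist_eq_norm, hh]
    have : z - (w + t • x) = t • (t⁻¹ • (z - w) - x) := by
      rw [smul_sub, smul_inv_smul₀ ht.ne']; abel
    rw [this, norm_smul, Real.norm_of_nonneg ht.le, mul_le_mul_iff_right₀ ht]
  have hpre1 : h ⁻¹' (closedBall 0 1) = closedBall w t := by simpa using hpre 0 1
  set c := (ENNReal.ofReal (t ^ d))⁻¹ with hc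
  have htd : 0 < t ^ d := Real.rpow_pos_of_pos ht d
  have hc1 : c * ENNReal.ofReal (t ^ d) = 1 := ENNReal.inv_mul_cancel (by simpa using htd) (by simp)
  have hgood : goodM d K 0 1 (c • μ.map h) := by
    refine ⟨fun x r hr0 hr1 => ?_, ?_⟩
    · rw [Measure.smul_apply, Measure.map_apply hm measurableSet_closedBall, hpre, smul_eq_mul]
      calc c * μ (closedBall (w + t • x) (t * r)) ≤ c * (K * ENNReal.ofReal ((t * r) ^ d)) := by
            gcongr; exact hμ.1 _ _ (by positivity) (by nlinarith)
        _ = c * ENNReal.ofReal (t ^ d) * (K * ENNReal.ofReal (r ^ d)) := by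
          rw [Real.mul_rpow ht.le hr0.le, ENNReal.ofReal_mul htd.le]; ring
        _ = _ := by rw [hc1, one_mul]
    · rw [Measure.smul_apply, Measure.map_apply hm measurableSet_closedBall, hpre1, smul_eq_mul]
      simp only [Real.one_rpow, ENNReal.ofReal_one]
      rw [← hc1, mul_left_comm]
      gcongr
      exact hμ.2
  obtain ⟨P', hP', hev⟩ := totalDegree_affine P w t
  have hev' : ∀ z, MvPolynomial.eval (h z) P' = MvPolynomial.eval z P := by
    intro z
    rw [hev]; congr 2
    funext i
    simp only [hh, Pi.smul_apply, Pi.sub_apply, smul_eq_mul]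
    field_simp; ring
  have := hC _ hgood P' (hP'.trans hP) (h y) (by rw [← mem_preimage, hpre1]; exact hy)
  rw [hev', Measure.restrict_smul, lintegral_smul_measure, setLIntegral_map measurableSet_closedBall
    (poly_cont P').enorm.measurable hm, hpre1] at this
  simpa only [hev', smul_eq_mul] using this

def av {n : ℕ} (F : Rn n → ℝ) (x : Rn n) (t : ℝ) : ℝ≥0∞ :=
  (volume (closedBall x t))⁻¹ * ∫⁻ y in closedBall x t, ‖F y‖ₑ

def EE {n : ℕ} (m : ℕ) (F : Rn n → ℝ) (x : Rn n) (t : ℝ) : ℝ≥0∞ :=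
  ⨅ (P : MvPolynomial (Fin n) ℝ) (_ : P.totalDegree ≤ m),
    av (fun y => F y - MvPolynomial.eval y P) x t

def GG {n : ℕ} (m : ℕ) (s q : ℝ) (F : Rn n → ℝ) (x : Rn n) : ℝ≥0∞ :=
  (∫⁻ t in Set.Ioo (0:ℝ) 1, (ENNReal.ofReal (t ^ (-s)) * EE m F x t) ^ q
        * ENNReal.ofReal t⁻¹) ^ (1 / q)

lemma localApprox_eq {n : ℕ} (m : ℕ) (F : Rn n → ℝ) (x : Rn n) (t : ℝ) :
    localApprox (m + 1) 1 F x t = EE m F x t := by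
  simp [localApprox, EE, av, Real.enorm_eq_ofReal_abs]

lemma tlNorm_eq {n : ℕ} (s p q : ℝ) (f : Rn n → ℝ) :
    tlNorm s p q f = (∫⁻ x, ‖f x‖ₑ ^ p) ^ (1 / p) + (∫⁻ x, GG ⌊s⌋₊ s q f x ^ p) ^ (1 / p) := by
  simp [tlNorm, GG, localApprox_eq, Real.enorm_eq_ofReal_abs]

lemma av_le_of_EE {n m : ℕ} {F : Rn n → ℝ} {x : Rn n} {t : ℝ} {X a b : ℝ≥0∞} (hb : b ≠ ⊤)
    (h : ∀ P : MvPolynomial (Fin n) ℝ, P.totalDegree ≤ m →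
      X ≤ a + b * av (fun y => F y - MvPolynomial.eval y P) x t) :
    X ≤ a + b * EE m F x t := by
  rcases eq_or_ne b 0 with rfl | hb0
  · simpa using h 0 (by simp)
  have : b⁻¹ * (X - a) ≤ EE m F x t := by
    refine le_iInf₂ fun P hP => ?_
    rw [ENNReal.inv_mul_le_iff hb0 hb]
    exact tsub_le_iff_left.2 (h P hP)
  rw [ENNReal.inv_mul_le_iff hb0 hb] at this
  exact tsub_le_iff_left.1 this

lemma EE_le {n m : ℕ} {F : Rn n → ℝ} {x : Rn n} {t : ℝ} (P : MvPolynomial (Fin n) ℝ)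
    (hP : P.totalDegree ≤ m) : EE m F x t ≤ av (fun y => F y - MvPolynomial.eval y P) x t :=
  iInf₂_le P hP

lemma EE_le_av {n m : ℕ} {F : Rn n → ℝ} {x : Rn n} {t : ℝ} : EE m F x t ≤ av F x t := by
  simpa using EE_le (m := m) (F := F) (x := x) (t := t) 0 (by simp)

lemma vol_cb {n : ℕ} (x : Rn n) {t : ℝ} (ht : 0 ≤ t) :
    volume (closedBall x t) = ENNReal.ofReal ((2 * t) ^ n) := by
  rw [Real.volume_pi_closedBall x ht]; simp

lemma av_mono {n : ℕ} {F : Rn n → ℝ} {x y : Rn n} {t r c : ℝ} (ht : 0 < t) (hr : 0 < r) (hc : 0 ≤ c)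
    (hd : dist x y + t ≤ r) (hrt : r ≤ c * t) :
    av F x t ≤ ENNReal.ofReal (c ^ n) * av F y r := by
  unfold av
  have hsub : closedBall x t ⊆ closedBall y r := closedBall_subset_closedBall' (by linarith)
  rw [← mul_assoc]
  gcongr
  rw [vol_cb _ ht.le, vol_cb _ hr.le]
  have h1 : 0 < (2 * t) ^ n := by positivity
  have h2 : 0 < (2 * r) ^ n := by positivity
  rw [← ENNReal.ofReal_inv_of_pos h1, ← ENNReal.ofReal_inv_of_pos h2,
    ← ENNReal.ofReal_mul (by positivity)]
  apply ENNReal.ofReal_le_ofReal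
  rw [← div_eq_mul_inv, le_div_iff₀ h2, inv_mul_le_iff₀ h1, ← mul_pow]
  gcongr ?_ ^ n
  linarith

lemma av_congr {n : ℕ} {F G : Rn n → ℝ} {x : Rn n} {t : ℝ}
    (h : ∀ᵐ y ∂volume.restrict (closedBall x t), F y = G y) : av F x t = av G x t := by
  unfold av
  congr 1
  exact lintegral_congr_ae (h.mono fun y hy => by simp [hy])

lemma EE_congr {n m : ℕ} {F G : Rn n → ℝ} {x : Rn n} {t : ℝ}
    (h : ∀ᵐ y ∂volume.restrict (closedBall x t), F y = G y) : EE m F x t = EE m G x t := by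
  unfold EE
  refine iInf_congr fun P => iInf_congr fun _ => av_congr (h.mono fun y hy => by simp [hy])

lemma av_add_le {n : ℕ} {F G : Rn n → ℝ} (hF : Measurable F) {x : Rn n} {t : ℝ} :
    av (fun y => F y + G y) x t ≤ av F x t + av G x t := by
  unfold av
  rw [← mul_add, ← lintegral_add_left hF.enorm]
  gcongr with y
  exact enorm_add_le _ _

lemma av_neg {n : ℕ} {F : Rn n → ℝ} {x : Rn n} {t : ℝ} :
    av (fun y => - F y) x t = av F x t := by
  simp [av]

lemma av_sub_comm {n : ℕ} {F G : Rn n → ℝ} {x : Rn n} {t : ℝ} :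
    av (fun y => F y - G y) x t = av (fun y => G y - F y) x t := by
  rw [← av_neg]; simp

lemma EE_mono {n m : ℕ} {F : Rn n → ℝ} {x y : Rn n} {t r c : ℝ} (ht : 0 < t) (hr : 0 < r)
    (hc : 0 ≤ c) (hd : dist x y + t ≤ r) (hrt : r ≤ c * t) :
    EE m F x t ≤ ENNReal.ofReal (c ^ n) * EE m F y r := by
  have := av_le_of_EE (m := m) (F := F) (x := y) (t := r) (X := EE m F x t) (a := 0)
    (b := ENNReal.ofReal (c ^ n)) (by simp) (fun P hP => by
      rw [zero_add]
      exact (EE_le P hP).trans (av_mono ht hr hc hd hrt))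
  simpa using this

lemma EE_sub_le {n m : ℕ} {F G : Rn n → ℝ} (hF : Measurable F) {x : Rn n} {t : ℝ} :
    EE m (fun y => F y - G y) x t ≤ EE m F x t + EE m G x t := by
  have := av_le_of_EE (m := m) (F := G) (x := x) (t := t) (X := EE m (fun y => F y - G y) x t)
    (a := EE m F x t) (b := 1) (by simp) (fun Q hQ => by
      rw [one_mul, add_comm]
      have h2 := av_le_of_EE (m := m) (F := F) (x := x) (t := t) (X := EE m (fun y => F y - G y) x t)
        (a := av (fun y => G y - MvPolynomial.eval y Q) x t) (b := 1) (by simp) (fun P hP => by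
        rw [one_mul, add_comm]
        refine (EE_le (P - Q) ((MvPolynomial.totalDegree_sub _ _).trans (max_le hP hQ))).trans ?_
        have e : (fun y => F y - G y - MvPolynomial.eval y (P - Q)) =
          fun y => (F y - MvPolynomial.eval y P) + (-(G y - MvPolynomial.eval y Q)) := by
          funext y; simp; ring
        rw [e]
        refine (av_add_le (hF.sub (poly_cont P).measurable)).trans ?_
        rw [av_neg]
        exact le_rfl)
      simpa using h2)
  simpa using this

lemma EE_le_add_av {n m : ℕ} {F G : Rn n → ℝ} (hF : Measurable F) (hG : Measurable G) {x : Rn n} {t : ℝ} :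
    EE m F x t ≤ EE m G x t + av (fun y => F y - G y) x t := by
  have e : F = fun y => G y - (G y - F y) := by funext y; simp
  calc EE m F x t = EE m (fun y => G y - (G y - F y)) x t := by rw [← e]
    _ ≤ EE m G x t + EE m (fun y => G y - F y) x t := EE_sub_le hG
    _ ≤ _ := by rw [av_sub_comm (F := F)]; gcongr; exact EE_le_av

lemma av_cont_lt_top {n : ℕ} {F : Rn n → ℝ} (hF : Continuous F) (x : Rn n) (t : ℝ) :
    av F x t ≠ ⊤ := by
  unfold av
  by_cases h0 : volume (closedBall x t) = 0
  · rw [setLIntegral_measure_zero _ _ h0]; simp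
  · refine ENNReal.mul_ne_top (by simpa using h0) ?_
    have := (hF.continuousOn (s := closedBall x t)).integrableOn_compact
      (μ := volume) (isCompact_closedBall x t)
    exact this.2.ne

lemma measurable_cbint {n : ℕ} {F : Rn n → ℝ≥0∞} (hF : Measurable F) :
    Measurable (fun z : Rn n × ℝ => ∫⁻ y in closedBall z.1 z.2, F y) := by
  have e : (fun z : Rn n × ℝ => ∫⁻ y in closedBall z.1 z.2, F y) =
      fun z : Rn n × ℝ => ∫⁻ y, (indicator {w : (Rn n × ℝ) × Rn n | dist w.2 w.1.1 ≤ w.1.2}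
        (fun w => F w.2)) (z, y) := by
    funext z
    rw [← lintegral_indicator measurableSet_closedBall]
    rfl
  rw [e]
  refine Measurable.lintegral_prod_right' (Measurable.indicator (by fun_prop) ?_)
  exact measurableSet_le (by fun_prop) (by fun_prop)

lemma measurable_av {n : ℕ} {F : Rn n → ℝ} (hF : Measurable F) :
    Measurable (fun z : Rn n × ℝ => av F z.1 z.2) := by
  unfold av
  refine Measurable.mul (Measurable.inv ?_) (measurable_cbint hF.enorm)
  simpa using measurable_cbint (n := n) (F := fun _ => 1) measurable_const

lemma exists_dense_poly (n m : ℕ) : ∃ S : ℕ → MvPolynomial (Fin n) ℝ,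
    (∀ k, (S k).totalDegree ≤ m) ∧ ∀ (F : Rn n → ℝ), Measurable F → ∀ x t,
      EE m F x t = ⨅ k, av (fun y => F y - MvPolynomial.eval y (S k)) x t := by
  let V := MvPolynomial.restrictTotalDegree (Fin n) ℝ m
  let b := Module.finBasis ℝ V
  let r := Module.finrank ℝ V
  let P : (Fin r → ℝ) → V := fun c => ∑ i, c i • b i
  have hev : ∀ c y, MvPolynomial.eval y (P c).1 = ∑ i, c i * MvPolynomial.eval y (b i).1 := by
    intro c y
    simp [P]
  refine ⟨fun k => (P (TopologicalSpace.denseSeq (Fin r → ℝ) k)).1, fun k =>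
    (MvPolynomial.mem_restrictTotalDegree _ _ _).1 (P _).2, fun F hF x t => le_antisymm ?_ ?_⟩
  · exact le_iInf fun k => EE_le _ ((MvPolynomial.mem_restrictTotalDegree _ _ _).1 (P _).2)
  · refine le_iInf₂ fun Q hQ => le_of_forall_gt fun a ha => ?_
    obtain ⟨c, hc⟩ : ∃ c, (P c).1 = Q := by
      refine ⟨b.repr ⟨Q, (MvPolynomial.mem_restrictTotalDegree _ _ _).2 hQ⟩, ?_⟩
      have := b.sum_repr ⟨Q, (MvPolynomial.mem_restrictTotalDegree _ _ _).2 hQ⟩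
      exact congrArg Subtype.val this
    have key : ∀ c', av (fun y => F y - MvPolynomial.eval y (P c').1) x t ≤
        av (fun y => F y - MvPolynomial.eval y Q) x t +
          ∑ i, ‖c i - c' i‖ₑ * av (fun y => MvPolynomial.eval y (b i).1) x t := by
      intro c'
      have e : (fun y => F y - MvPolynomial.eval y (P c').1) =
          fun y => (F y - MvPolynomial.eval y Q) +
            ∑ i, (c i - c' i) * MvPolynomial.eval y (b i).1 := by
        funext y
        rw [← hc, hev, hev]
        simp only [sub_mul, Finset.sum_sub_distrib]; ring
      rw [e]
      refine (av_add_le (hF.sub (poly_cont Q).measurable)).trans ?_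
      refine add_le_add le_rfl ?_
      unfold av
      calc (volume (closedBall x t))⁻¹ * ∫⁻ y in closedBall x t,
            ‖∑ i, (c i - c' i) * MvPolynomial.eval y (b i).1‖ₑ
        _ ≤ (volume (closedBall x t))⁻¹ * ∫⁻ y in closedBall x t,
            ∑ i, ‖c i - c' i‖ₑ * ‖MvPolynomial.eval y (b i).1‖ₑ := by
            refine mul_le_mul_right (lintegral_mono fun y => ?_) _
            refine (enorm_sum_le _ _).trans ?_
            simp [enorm_mul]
        _ = _ := by
          rw [lintegral_finsetSum _ (fun i _ => ((poly_cont (b i).1).enorm.measurable.const_mul _)),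
            Finset.mul_sum]
          refine Finset.sum_congr rfl fun i _ => ?_
          rw [lintegral_const_mul _ (poly_cont (b i).1).enorm.measurable]; ring
    have hcontn : Continuous (fun c' : Fin r → ℝ => av (fun y => F y - MvPolynomial.eval y Q) x t +
          ∑ i, ‖c i - c' i‖ₑ * av (fun y => MvPolynomial.eval y (b i).1) x t) := by
      refine continuous_const.add (continuous_finsetSum _ fun i _ => ?_)
      refine (ENNReal.continuous_mul_const (av_cont_lt_top (poly_cont _) x t)).comp ?_
      exact (continuous_const.sub (continuous_apply i)).enorm
    have hopen : IsOpen {c' : Fin r → ℝ | av (fun y => F y - MvPolynomial.eval y Q) x t +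
          ∑ i, ‖c i - c' i‖ₑ * av (fun y => MvPolynomial.eval y (b i).1) x t < a} :=
      isOpen_lt hcontn continuous_const
    obtain ⟨_, hk1, ⟨k, rfl⟩⟩ := (TopologicalSpace.denseRange_denseSeq (Fin r → ℝ)).inter_open_nonempty _
      hopen ⟨c, by simpa using ha⟩
    exact (iInf_le _ k).trans_lt ((key _).trans_lt hk1)

lemma measurable_EE {n m : ℕ} {F : Rn n → ℝ} (hF : Measurable F) :
    Measurable (fun z : Rn n × ℝ => EE m F z.1 z.2) := by
  obtain ⟨S, _, hS⟩ := exists_dense_poly n m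
  simp_rw [hS F hF]
  exact Measurable.iInf fun k => measurable_av (hF.sub (poly_cont _).measurable)

lemma measurable_GG {n m : ℕ} {s q : ℝ} {F : Rn n → ℝ} (hF : Measurable F) :
    Measurable (GG m s q F) := by
  unfold GG
  refine Measurable.pow_const ?_ _
  refine Measurable.lintegral_prod_right' (f := fun z : Rn n × ℝ =>
    (ENNReal.ofReal (z.2 ^ (-s)) * EE m F z.1 z.2) ^ q * ENNReal.ofReal z.2⁻¹) ?_
  have := measurable_EE (m := m) hF
  fun_prop

lemma meas_aux_x {n : ℕ} {G : Rn n → ℝ → ℝ≥0∞} (h : Measurable (fun z : Rn n × ℝ => G z.1 z.2)) (t : ℝ) :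
    Measurable (fun x : Rn n => G x t) := by
  have h2 : Measurable (fun x : Rn n => (x, t)) := by fun_prop
  exact Measurable.comp (g := fun z : Rn n × ℝ => G z.1 z.2) h h2

lemma meas_aux_t {n : ℕ} {G : Rn n → ℝ → ℝ≥0∞} (h : Measurable (fun z : Rn n × ℝ => G z.1 z.2)) (x : Rn n) :
    Measurable (fun t : ℝ => G x t) := by
  have h2 : Measurable (fun t : ℝ => (x, t)) := by fun_prop
  exact Measurable.comp (g := fun z : Rn n × ℝ => G z.1 z.2) h h2

lemma measurable_EE_x {n m : ℕ} {F : Rn n → ℝ} (hF : Measurable F) (t : ℝ) :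
    Measurable (fun x : Rn n => EE m F x t) := meas_aux_x (G := EE m F) (measurable_EE hF) t
lemma measurable_EE_t {n m : ℕ} {F : Rn n → ℝ} (hF : Measurable F) (x : Rn n) :
    Measurable (fun t : ℝ => EE m F x t) := meas_aux_t (G := EE m F) (measurable_EE hF) x
lemma measurable_av_x {n : ℕ} {F : Rn n → ℝ} (hF : Measurable F) (t : ℝ) :
    Measurable (fun x : Rn n => av F x t) := meas_aux_x (G := av F) (measurable_av hF) t

lemma wt_eq {a w : ℝ≥0∞} {q : ℝ} (hq : 1 ≤ q) : a ^ q * w = (a * w ^ (1/q)) ^ q := by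
  have : 0 < q := by linarith
  rw [ENNReal.mul_rpow_of_nonneg _ _ this.le, ← ENNReal.rpow_mul, one_div_mul_cancel this.ne',
    ENNReal.rpow_one]

lemma GG_sub_le {n m : ℕ} {s q : ℝ} (hq : 1 ≤ q) {F G : Rn n → ℝ} (hF : Measurable F) (hG : Measurable G)
    (x : Rn n) : GG m s q (fun y => F y - G y) x ≤ GG m s q F x + GG m s q G x := by
  unfold GG
  simp_rw [wt_eq hq]
  have mF := measurable_EE_t (m := m) hF x
  have mG := measurable_EE_t (m := m) hG x
  refine le_trans ?_ (ENNReal.lintegral_Lp_add_le (μ := volume.restrict (Ioo (0:ℝ) 1))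
    (f := fun t => ENNReal.ofReal (t ^ (-s)) * EE m F x t * ENNReal.ofReal t⁻¹ ^ (1/q))
    (g := fun t => ENNReal.ofReal (t ^ (-s)) * EE m G x t * ENNReal.ofReal t⁻¹ ^ (1/q))
    (by fun_prop) (by fun_prop) hq)
  have : 0 ≤ q := by linarith
  refine ENNReal.rpow_le_rpow (lintegral_mono fun t => ENNReal.rpow_le_rpow ?_ this) (by positivity)
  simp only [Pi.add_apply]
  rw [← add_mul, ← mul_add]
  gcongr
  exact EE_sub_le hF

lemma tlNorm_sub_le {n : ℕ} {s p q : ℝ} (hp : 1 ≤ p) (hq : 1 ≤ q) {F G : Rn n → ℝ} (hF : Measurable F)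
    (hG : Measurable G) :
    tlNorm s p q (fun y => F y - G y) ≤ tlNorm s p q F + tlNorm s p q G := by
  simp only [tlNorm_eq]
  have : 0 ≤ p := by linarith
  have h1 := ENNReal.lintegral_Lp_add_le (μ := volume) (f := fun x => ‖F x‖ₑ) (g := fun x => ‖G x‖ₑ)
    hF.enorm.aemeasurable hG.enorm.aemeasurable hp
  have h2 := ENNReal.lintegral_Lp_add_le (μ := volume) (f := GG ⌊s⌋₊ s q F) (g := GG ⌊s⌋₊ s q G)
    (measurable_GG hF).aemeasurable (measurable_GG hG).aemeasurable hp
  rw [add_add_add_comm]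
  refine add_le_add (le_trans ?_ h1) (le_trans ?_ h2)
  · refine ENNReal.rpow_le_rpow (lintegral_mono fun t => ENNReal.rpow_le_rpow ?_ this) (by positivity)
    exact enorm_sub_le
  · refine ENNReal.rpow_le_rpow (lintegral_mono fun t => ENNReal.rpow_le_rpow ?_ this) (by positivity)
    exact GG_sub_le hq hF hG t

lemma le_liminf_aux {u : ℝ≥0∞} {v e : ℕ → ℝ≥0∞} (h : ∀ j, u ≤ v j + e j) (he : Tendsto e atTop (𝓝 0)) :
    u ≤ liminf v atTop := by
  refine ENNReal.le_of_forall_pos_le_add fun ε hε hlt => ?_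
  have h1 : ∀ᶠ j in atTop, u - ε ≤ v j := by
    filter_upwards [he.eventually (gt_mem_nhds (show (0:ℝ≥0∞) < ε by exact_mod_cast hε))] with j hj
    refine tsub_le_iff_right.2 ((h j).trans (add_le_add le_rfl hj.le))
  exact tsub_le_iff_right.1 (le_liminf_of_le (by isBoundedDefault) h1)

lemma liminf_map {Φ : ℝ≥0∞ → ℝ≥0∞} (hm : Monotone Φ) (hc : Continuous Φ) {u : ℝ≥0∞} {v : ℕ → ℝ≥0∞}
    (h : u ≤ liminf v atTop) : Φ u ≤ liminf (fun j => Φ (v j)) atTop := by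
  have := hm.map_liminf_of_continuousAt (F := atTop) v hc.continuousAt
    (by isBoundedDefault) (by isBoundedDefault)
  exact (hm h).trans this.le

lemma jensen {α : Type*} [MeasurableSpace α] (μ : Measure α) {p : ℝ} (hp : 1 < p) {f : α → ℝ≥0∞}
    (hf : AEMeasurable f μ) : (∫⁻ x, f x ∂μ) ^ p ≤ (μ univ) ^ (p - 1) * ∫⁻ x, f x ^ p ∂μ := by
  have hp0 : 0 < p := by linarith
  have hc := Real.HolderConjugate.conjExponent hp
  have h := ENNReal.lintegral_mul_le_Lp_mul_Lq μ hc hf (g := fun _ => 1) aemeasurable_const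
  simp only [Pi.mul_apply, mul_one, ENNReal.one_rpow, lintegral_const, one_mul] at h
  refine (ENNReal.rpow_le_rpow h hp0.le).trans (le_of_eq ?_)
  rw [ENNReal.mul_rpow_of_nonneg _ _ hp0.le, ← ENNReal.rpow_mul, ← ENNReal.rpow_mul,
    one_div_mul_cancel hp0.ne', ENNReal.rpow_one, mul_comm]
  congr 2
  rw [Real.conjExponent]
  have : p - 1 ≠ 0 := by linarith
  field_simp

lemma jensenK {α : Type*} [MeasurableSpace α] (μ : Measure α) {p : ℝ} (hp : 1 < p) {f : α → ℝ≥0∞}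
    (hf : AEMeasurable f μ) {D K : ℝ≥0∞} (hD0 : D ≠ 0) (hD : D ≠ ⊤) (h : μ univ ≤ K * D) :
    (D⁻¹ * ∫⁻ x, f x ∂μ) ^ p ≤ K ^ (p - 1) * (D⁻¹ * ∫⁻ x, f x ^ p ∂μ) := by
  have hp0 : 0 < p := by linarith
  rw [ENNReal.mul_rpow_of_nonneg _ _ hp0.le]
  calc D⁻¹ ^ p * (∫⁻ x, f x ∂μ) ^ p ≤ D⁻¹ ^ p * ((K * D) ^ (p - 1) * ∫⁻ x, f x ^ p ∂μ) := by
        gcongr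
        refine (jensen μ hp hf).trans ?_
        gcongr
    _ = (D⁻¹ ^ p * D ^ (p - 1)) * (K ^ (p - 1) * ∫⁻ x, f x ^ p ∂μ) := by
        rw [ENNReal.mul_rpow_of_nonneg _ _ (by linarith)]; ring
    _ = _ := by
        have : D⁻¹ ^ p * D ^ (p - 1) = D⁻¹ := by
          rw [← ENNReal.rpow_neg_one, ← ENNReal.rpow_mul, ← ENNReal.rpow_add _ _ hD0 hD]
          congr 1; ring
        rw [this]; ring

lemma av_rpow_le {n : ℕ} {p : ℝ} (hp : 1 < p) {F : Rn n → ℝ} (hF : Measurable F) (x : Rn n) {t : ℝ} (ht : 0 < t) :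
    av F x t ^ p ≤ (volume (closedBall x t))⁻¹ * ∫⁻ y in closedBall x t, ‖F y‖ₑ ^ p := by
  have := jensenK (volume.restrict (closedBall x t)) hp (f := fun y => ‖F y‖ₑ)
    hF.enorm.aemeasurable (D := volume (closedBall x t)) (K := 1) (measure_closedBall_pos _ _ ht).ne'
     measure_closedBall_lt_top.ne (by simp)
  simpa [av] using this

lemma GG_fatou {n m : ℕ} {s p q : ℝ} (hp : 1 < p) (hq : 1 ≤ q) {g : Rn n → ℝ} {φ : ℕ → Rn n → ℝ}
    (hg : Measurable g) (hφ : ∀ j, Measurable (φ j))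
    (hlim : Tendsto (fun j => ∫⁻ x, ‖g x - φ j x‖ₑ ^ p) atTop (𝓝 0)) :
    (∫⁻ x, GG m s q g x ^ p) ^ (1/p) ≤ liminf (fun j => (∫⁻ x, GG m s q (φ j) x ^ p) ^ (1/p)) atTop := by
  have hp0 : 0 < p := by linarith
  have hq0 : 0 < q := by linarith
  have rp : ∀ {r : ℝ} (_ : 0 < r), Monotone (fun a : ℝ≥0∞ => a ^ r) := fun hr a b h =>
    ENNReal.rpow_le_rpow h hr.le
  have e1 : ∀ x t, 0 < t → EE m g x t ≤ liminf (fun j => EE m (φ j) x t) atTop := by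
    intro x t ht
    refine le_liminf_aux (e := fun j => av (fun y => g y - φ j y) x t)
      (fun j => EE_le_add_av hg (hφ j)) ?_
    have h0 : Tendsto (fun j => ((volume (closedBall x t))⁻¹ * ∫⁻ x, ‖g x - φ j x‖ₑ ^ p) ^ (1/p))
        atTop (𝓝 0) := by
      have h1 := ENNReal.Tendsto.const_mul (a := (volume (closedBall x t))⁻¹) hlim
        (Or.inr (by simpa using (measure_closedBall_pos volume x ht).ne'))
      have h2 := (ENNReal.continuous_rpow_const (y := 1/p)).tendsto _ |>.comp h1
      simpa [hp0] using! h2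
    refine tendsto_of_tendsto_of_tendsto_of_le_of_le tendsto_const_nhds h0 (fun _ => zero_le) fun j => ?_
    have := av_rpow_le hp (hg.sub (hφ j)) x ht
    have h3 := ENNReal.rpow_le_rpow this (z := 1/p) (by positivity)
    rw [← ENNReal.rpow_mul, mul_one_div_cancel hp0.ne', ENNReal.rpow_one] at h3
    refine h3.trans ?_
    simp only [Pi.sub_apply]
    gcongr
    exact Measure.restrict_le_self
  have e2 : ∀ x, GG m s q g x ≤ liminf (fun j => GG m s q (φ j) x) atTop := by
    intro x
    unfold GG
    refine liminf_map (rp (by positivity)) (ENNReal.continuous_rpow_const (y := 1/q)) ?_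
    refine le_trans ?_ (lintegral_liminf_le fun j => ?_)
    · refine setLIntegral_mono' measurableSet_Ioo fun t ht => ?_
      refine liminf_map (Φ := fun a => (ENNReal.ofReal (t ^ (-s)) * a) ^ q * ENNReal.ofReal t⁻¹) ?_ ?_
        (e1 x t ht.1)
      · intro a b hab
        dsimp only
        gcongr
      · refine (ENNReal.continuous_mul_const (by simp)).comp
          ((ENNReal.continuous_rpow_const).comp (ENNReal.continuous_const_mul (by simp)))
    · have mF := measurable_EE_t (m := m) (hφ j) x
      fun_prop
  refine liminf_map (rp (by positivity)) (ENNReal.continuous_rpow_const (y := 1/p)) ?_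
  refine le_trans ?_ (lintegral_liminf_le fun j => ?_)
  · exact lintegral_mono fun x => liminf_map (rp hp0) (ENNReal.continuous_rpow_const (y := p)) (e2 x)
  · exact (measurable_GG (hφ j)).pow_const _

def Apriori {n : ℕ} (Ω : Set (Rn n)) (s p q : ℝ) : Prop :=
  ∃ C : ℝ≥0, ∀ φ F : Rn n → ℝ, Measurable φ → Measurable F → (∀ x ∉ Ω, φ x = 0) →
    (∃ t0 > 0, ∀ w ∈ frontier Ω, ∀ y ∈ closedBall w t0, φ y = 0) →
    (∀ᵐ x ∂volume.restrict Ω, F x = φ x) → tlNorm s p q φ ≤ C * tlNorm s p q F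

lemma tlNormOn_sub_le {n : ℕ} {Ω : Set (Rn n)} {s p q : ℝ} (hp : 1 ≤ p) (hq : 1 ≤ q) {f g : Rn n → ℝ} :
    tlNormOn Ω s p q g ≤ tlNormOn Ω s p q f + tlNormOn Ω s p q (fun x => f x - g x) := by
  simp only [tlNormOn]
  rw [← tsub_le_iff_right]
  refine le_iInf₂ fun F hF => le_iInf fun hFf => ?_
  rw [tsub_le_iff_left]
  rw [← tsub_le_iff_right]
  refine le_iInf₂ fun H hH => le_iInf fun hHf => ?_
  rw [tsub_le_iff_left]
  refine le_trans ?_ (tlNorm_sub_le hp hq hF hH)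
  refine iInf₂_le_of_le _ (hF.sub hH) (iInf_le_of_le ?_ le_rfl)
  filter_upwards [hFf, hHf] with x h1 h2
  simp [h1, h2]

lemma Lp_le_tlNormOn {n : ℕ} {Ω : Set (Rn n)} {s p q : ℝ} (hp : 1 < p) {f : Rn n → ℝ} :
    (∫⁻ x in Ω, ‖f x‖ₑ ^ p) ^ (1/p) ≤ tlNormOn Ω s p q f := by
  refine le_iInf₂ fun F hF => le_iInf fun hFf => ?_
  rw [tlNorm_eq]
  refine le_trans ?_ le_self_add
  refine ENNReal.rpow_le_rpow ?_ (by positivity)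
  rw [lintegral_congr_ae (g := fun x => ‖F x‖ₑ ^ p) (hFf.mono fun x hx => by simp only [hx])]
  exact setLIntegral_le_lintegral _ _

lemma reduction {n : ℕ} (Ω : Set (Rn n)) (hΩo : IsOpen Ω) (p q s : ℝ) (hp : 1 < p) (hq : 1 ≤ q)
    (hA : Apriori Ω s p q) :
    ∃ C > 0, ∀ f : Rn n → ℝ, Measurable f →
      (∫⁻ x in Ω, ENNReal.ofReal |f x| ^ p) < ⊤ →
      (∃ φ : ℕ → Rn n → ℝ,
        (∀ j, ContDiff ℝ (⊤ : ℕ∞) (φ j) ∧ HasCompactSupport (φ j) ∧ tsupport (φ j) ⊆ Ω) ∧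
        Tendsto (fun j => tlNormOn Ω s p q (fun x => f x - φ j x)) atTop (𝓝 0)) →
      ∃ g : Rn n → ℝ, Measurable g ∧ (∀ᵐ x ∂volume.restrict Ω, g x = f x) ∧
        (∀ᵐ x ∂volume, x ∉ closure Ω → g x = 0) ∧
        tlNorm s p q g ≤ ENNReal.ofReal C * tlNormOn Ω s p q f := by
  obtain ⟨C, hC0, hC⟩ : ∃ C : ℝ≥0, C ≠ 0 ∧ ∀ φ F : Rn n → ℝ, Measurable φ → Measurable F →
      (∀ x ∉ Ω, φ x = 0) → (∃ t0 > 0, ∀ w ∈ frontier Ω, ∀ y ∈ closedBall w t0, φ y = 0) →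
      (∀ᵐ x ∂volume.restrict Ω, F x = φ x) → tlNorm s p q φ ≤ C * tlNorm s p q F := by
    obtain ⟨C, hC⟩ := hA
    refine ⟨C + 1, by positivity, fun φ F h1 h2 h3 h4 h5 => (hC φ F h1 h2 h3 h4 h5).trans ?_⟩
    gcongr
    simp
  have hp0 : 0 < p := by linarith
  refine ⟨1 + C, by positivity, fun f hf _ ⟨φ, hφ, hlim⟩ => ?_⟩
  set g := Ω.indicator f with hgdef
  have hg : Measurable g := hf.indicator hΩo.measurableSet
  have hφm : ∀ j, Measurable (φ j) := fun j => (hφ j).1.continuous.measurable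
  have hgf : ∀ x ∈ Ω, g x = f x := fun x hx => indicator_of_mem hx f
  have hg0 : ∀ x ∉ Ω, g x = 0 := fun x hx => indicator_of_notMem hx f
  have hφ0 : ∀ j, ∀ x ∉ Ω, φ j x = 0 := fun j x hx => by
    by_contra h
    exact hx ((hφ j).2.2 (subset_tsupport _ h))
  refine ⟨g, hg, (ae_restrict_iff' hΩo.measurableSet).2 (.of_forall hgf),
    .of_forall fun x hx => hg0 x fun h => hx (subset_closure h), ?_⟩
  have e1 : ∀ j, tlNorm s p q (φ j) ≤ C * (tlNormOn Ω s p q f + tlNormOn Ω s p q (fun x => f x - φ j x)) := by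
    intro j
    refine le_trans ?_ (mul_le_mul_right (tlNormOn_sub_le hp.le hq) _)
    simp only [tlNormOn]
    rw [← ENNReal.inv_mul_le_iff (by simpa using hC0) (by simp)]
    refine le_iInf₂ fun F hF => le_iInf fun hFf => ?_
    rw [ENNReal.inv_mul_le_iff (by simpa using hC0) (by simp)]
    refine hC (φ j) F (hφm j) hF (hφ0 j) ?_ hFf
    obtain ⟨δ, hδ, h⟩ := (hφ j).2.1.isCompact.exists_cthickening_subset_open hΩo (hφ j).2.2
    refine ⟨δ, hδ, fun w hw y hy => ?_⟩
    by_contra h0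
    have : w ∈ Ω := h (mem_cthickening_of_dist_le w y δ _ (subset_tsupport _ h0)
      (by rw [dist_comm]; exact hy))
    rw [hΩo.frontier_eq] at hw
    exact hw.2 this
  have e2 : Tendsto (fun j => ∫⁻ x, ‖g x - φ j x‖ₑ ^ p) atTop (𝓝 0) := by
    have h2 := (ENNReal.continuous_rpow_const (y := p)).tendsto _ |>.comp hlim
    rw [ENNReal.zero_rpow_of_pos hp0] at h2
    refine tendsto_of_tendsto_of_tendsto_of_le_of_le tendsto_const_nhds h2 (fun _ => zero_le) fun j => ?_
    have h3 := ENNReal.rpow_le_rpow (Lp_le_tlNormOn (Ω := Ω) (s := s) (q := q) hp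
      (f := fun x => f x - φ j x)) hp0.le
    rw [← ENNReal.rpow_mul, one_div_mul_cancel hp0.ne', ENNReal.rpow_one] at h3
    refine le_trans (le_of_eq ?_) h3
    rw [← lintegral_indicator hΩo.measurableSet]
    refine lintegral_congr fun x => ?_
    by_cases hx : x ∈ Ω
    · simp [hx, hgf]
    · simp [hx, hg0, hφ0, hp0]
  have e3 : (∫⁻ x, ‖g x‖ₑ ^ p) ^ (1/p) ≤ tlNormOn Ω s p q f := by
    refine le_trans (le_of_eq ?_) (Lp_le_tlNormOn hp)
    congr 1
    rw [← lintegral_indicator hΩo.measurableSet]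
    refine lintegral_congr fun x => ?_
    by_cases hx : x ∈ Ω
    · simp [hx, hgf]
    · simp [hx, hg0, hp0]
  have e4 := GG_fatou (m := ⌊s⌋₊) (s := s) hp hq hg hφm e2
  have e5 : Tendsto (fun j => (C : ℝ≥0∞) * (tlNormOn Ω s p q f + tlNormOn Ω s p q (fun x => f x - φ j x)))
      atTop (𝓝 (C * (tlNormOn Ω s p q f + 0))) :=
    ENNReal.Tendsto.const_mul (hlim.const_add _) (Or.inr (by simp))
  have e6 : liminf (fun j => (∫⁻ x, GG ⌊s⌋₊ s q (φ j) x ^ p) ^ (1/p)) atTop ≤ C * tlNormOn Ω s p q f := by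
    rw [add_zero] at e5
    rw [← e5.liminf_eq]
    refine liminf_le_liminf (.of_forall fun j => le_trans ?_ (e1 j))
    rw [tlNorm_eq]
    exact le_add_self
  rw [tlNorm_eq, ENNReal.ofReal_add (by simp) (by simp), add_mul]
  refine add_le_add (by simpa using e3) ((e4.trans e6).trans ?_)
  simp

def W (a : ℝ) (j : ℕ) : ℝ≥0∞ := (2:ℝ≥0∞) ^ (a * j)
def R (j : ℕ) : ℝ := (1/2:ℝ) ^ j

lemma R_pos (j : ℕ) : 0 < R j := by unfold R; positivity
lemma R_succ (j : ℕ) : R (j+1) = R j / 2 := by unfold R; rw [pow_succ]; ring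
lemma R_anti {i j : ℕ} (h : i ≤ j) : R j ≤ R i := pow_le_pow_of_le_one (by norm_num) (by norm_num) h
lemma R_le_one (j : ℕ) : R j ≤ 1 := pow_le_one₀ (by norm_num) (by norm_num)

lemma W_ne_zero (a : ℝ) (j : ℕ) : W a j ≠ 0 := by simp [W]
lemma W_ne_top (a : ℝ) (j : ℕ) : W a j ≠ ⊤ := by
  unfold W
  exact ENNReal.rpow_ne_top_of_ne_zero (by simp) (by simp)
lemma W_zero (a : ℝ) : W a 0 = 1 := by simp [W]
lemma W_zero' (j : ℕ) : W 0 j = 1 := by simp [W]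
lemma W_add (a : ℝ) (i j : ℕ) : W a (i + j) = W a i * W a j := by
  unfold W
  rw [← ENNReal.rpow_add _ _ (by simp) (by simp)]
  push_cast; ring_nf
lemma W_mul (a b : ℝ) (i : ℕ) : W a i * W b i = W (a + b) i := by
  unfold W
  rw [← ENNReal.rpow_add _ _ (by simp) (by simp)]
  ring_nf
lemma W_rpow (a p : ℝ) (i : ℕ) : W a i ^ p = W (a * p) i := by
  unfold W
  rw [← ENNReal.rpow_mul]
  ring_nf
lemma W_inv (a : ℝ) (i : ℕ) : (W a i)⁻¹ = W (-a) i := by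
  unfold W
  rw [← ENNReal.rpow_neg]
  ring_nf
lemma W_mono {a : ℝ} (ha : 0 ≤ a) {i j : ℕ} (h : i ≤ j) : W a i ≤ W a j := by
  unfold W
  refine ENNReal.rpow_le_rpow_of_exponent_le (by norm_num) ?_
  gcongr
lemma W_one_le {a : ℝ} (ha : 0 ≤ a) (j : ℕ) : 1 ≤ W a j := by
  rw [← W_zero a]; exact W_mono ha (Nat.zero_le j)

lemma R_eq (j : ℕ) : R j = (2:ℝ) ^ (-(j:ℝ)) := by
  unfold R
  rw [Real.rpow_neg (by norm_num), Real.rpow_natCast]; simp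

lemma ofReal_R (d : ℝ) (j : ℕ) : ENNReal.ofReal (R j ^ d) = W (-d) j := by
  rw [R_eq, ← Real.rpow_mul (by norm_num), ← ENNReal.ofReal_rpow_of_pos (by norm_num), W]
  simp only [ENNReal.ofReal_ofNat]
  congr 1; ring

lemma W_sum {a : ℝ} (ha : 0 < a) : ∑' j, W (-a) j ≠ ⊤ := by
  have : ∀ j, W (-a) j = ((2:ℝ≥0∞) ^ (-a)) ^ j := by
    intro j; rw [W, ENNReal.rpow_mul, ENNReal.rpow_natCast]
  simp_rw [this]
  rw [ENNReal.tsum_geometric]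
  have h : (2:ℝ≥0∞) ^ (-a) < 1 := ENNReal.rpow_lt_one_of_one_lt_of_neg (by norm_num) (by linarith)
  simpa [tsub_eq_zero_iff_le] using h

lemma generic {p γ : ℝ} (hp : 1 < p) (hγ : 0 < γ) : ∃ C : ℝ≥0, ∀ c : ℕ → ℝ≥0∞,
    (∑' l, c l) ^ p ≤ C * ∑' l, W γ l * c l ^ p := by
  have hp0 : 0 < p := by linarith
  have hc := Real.HolderConjugate.conjExponent hp
  set p' := Real.conjExponent p
  have hp' : 0 < p' := hc.symm.pos
  have hS : ∑' j, W (-(γ / p * p')) j ≠ ⊤ := W_sum (by positivity)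
  refine ⟨((∑' j, W (-(γ / p * p')) j) ^ (1/p' * p)).toNNReal, fun c => ?_⟩
  rw [ENNReal.coe_toNNReal (ENNReal.rpow_ne_top_of_nonneg (by positivity) hS)]
  have h := ENNReal.lintegral_mul_le_Lp_mul_Lq Measure.count hc
    (f := fun l => W (γ / p) l * c l) (g := fun l => W (-(γ/p)) l) (by fun_prop) (by fun_prop)
  simp only [Pi.mul_apply, lintegral_count] at h
  have e : ∀ l, W (γ / p) l * c l * W (-(γ/p)) l = c l := by
    intro l
    rw [mul_right_comm, W_mul]; simp [W_zero']
  simp_rw [e, ENNReal.mul_rpow_of_nonneg _ _ hp0.le, W_rpow] at h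
  refine (ENNReal.rpow_le_rpow h hp0.le).trans (le_of_eq ?_)
  rw [ENNReal.mul_rpow_of_nonneg _ _ hp0.le, ← ENNReal.rpow_mul, ← ENNReal.rpow_mul,
    one_div_mul_cancel hp0.ne', ENNReal.rpow_one, div_mul_cancel₀ _ hp0.ne', mul_comm, neg_mul]

/-- decreasing family of sets version -/
lemma layer {p γ : ℝ} (hp : 1 < p) (hγ : 0 < γ) : ∃ C : ℝ≥0, ∀ (c : ℕ → ℝ≥0∞) (U : ℕ → Prop),
    (∀ i j, i ≤ j → U j → U i) →
    (∑' i, {i | U i}.indicator c i) ^ p ≤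
      C * ∑' i, c i ^ p * ∑' l, {l | U (i + l)}.indicator (W γ) l := by
  obtain ⟨C, hC⟩ := generic hp hγ
  have hp0 : 0 < p := by linarith
  refine ⟨C + 1, fun c U hU => ?_⟩
  by_cases hall : ∀ i, U i
  · by_cases h0 : ∀ i, c i = 0
    · simp [h0, hp0]
    · push Not at h0
      obtain ⟨i, hi⟩ := h0
      have : ∑' l, {l | U (i + l)}.indicator (W γ) l = ⊤ := by
        rw [eq_top_iff, ← ENNReal.tsum_const_eq_top_of_ne_zero (α := ℕ) (c := 1) (by simp)]
        refine ENNReal.tsum_le_tsum fun l => ?_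
        simp [hall, W_one_le hγ.le]
      have h2 : ∑' i, c i ^ p * ∑' l, {l | U (i + l)}.indicator (W γ) l = ⊤ := by
        rw [eq_top_iff]
        refine le_trans (le_of_eq ?_) (ENNReal.le_tsum i)
        rw [this, ENNReal.mul_top]
        simp [hi, hp0.le]
      rw [h2, ENNReal.mul_top (by simp)]
      exact le_top
  · push Not at hall
    obtain ⟨k, hk⟩ := hall
    by_cases hne : ∃ i, U i
    swap
    · push Not at hne
      simp [hne, hp0]
    obtain ⟨M, hM, hM2⟩ : ∃ M, U M ∧ ∀ i, U i → i ≤ M := by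
      classical
      have hb : ∀ i, U i → i ≤ k := fun i hi => by
        by_contra h
        exact hk (hU k i (by omega) hi)
      obtain ⟨i0, h0⟩ := hne
      exact ⟨Nat.findGreatest U k, Nat.findGreatest_spec (hb i0 h0) h0,
        fun i hi => Nat.le_findGreatest (hb i hi) hi⟩
    have e1 : ∑' i, {i | U i}.indicator c i = ∑ i ∈ Finset.range (M+1), c i := by
      rw [tsum_eq_sum (s := Finset.range (M+1))]
      · refine Finset.sum_congr rfl fun i hi => ?_
        rw [indicator_of_mem]
        exact hU i M (by simpa [Nat.lt_succ_iff] using hi) hM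
      · intro i hi
        rw [indicator_of_notMem]
        intro h
        have := hM2 i h
        simp at hi; omega
    have h3 := hC (fun l => if l ∈ Finset.range (M+1) then c (M - l) else 0)
    have e2 : ∑' l, (if l ∈ Finset.range (M+1) then c (M - l) else 0) =
        ∑ i ∈ Finset.range (M+1), c i := by
      rw [tsum_eq_sum (s := Finset.range (M+1)) (by intro b hb; simp only [hb, if_false])]
      rw [← Finset.sum_range_reflect]
      refine Finset.sum_congr rfl fun i hi => ?_
      have e3 : M + 1 - 1 - i ∈ Finset.range (M+1) := Finset.mem_range.2 (by omega)
      have hi' : i < M + 1 := Finset.mem_range.1 hi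
      have e4 : M - (M + 1 - 1 - i) = i := by omega
      simp only [e3, if_true, e4]
    rw [e1, ← e2]
    refine h3.trans ?_
    refine mul_le_mul' (by simp) ?_
    rw [tsum_eq_sum (s := Finset.range (M+1)) (by intro b hb; simp [hb, hp0])]
    rw [← Finset.sum_range_reflect]
    refine le_trans (Finset.sum_le_sum fun i hi => ?_) (ENNReal.sum_le_tsum (Finset.range (M+1)))
    have hi' : i ≤ M := by simpa [Nat.lt_succ_iff] using hi
    have e3 : M + 1 - 1 - i ∈ Finset.range (M+1) := Finset.mem_range.2 (by omega)
    have e4 : M - (M + 1 - 1 - i) = i := by omega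
    simp only [e3, if_true, e4]
    rw [mul_comm]
    gcongr
    refine le_trans (le_of_eq ?_) (ENNReal.le_tsum (M + 1 - 1 - i))
    rw [indicator_of_mem]
    have : i + (M + 1 - 1 - i) = M := by omega
    change U _
    rwa [this]

lemma vol_cb' {N : ℕ} (x : Rn (N+1)) {t : ℝ} (ht : 0 ≤ t) :
    volume (closedBall x t) = 2 ^ (N+1) * ENNReal.ofReal (t ^ ((N:ℝ)+1)) := by
  rw [vol_cb x ht, mul_pow, ENNReal.ofReal_mul (by positivity)]
  congr 1
  · rw [ENNReal.ofReal_pow (by norm_num)]; simp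
  · congr 1
    rw [← Real.rpow_natCast]; push_cast; rfl

lemma markov_av (N m : ℕ) (K : ℝ≥0∞) (hK : K ≠ ⊤) : ∃ C : ℝ≥0, ∀ (S : Set (Rn (N+1))), MeasurableSet S →
    ∀ (w : Rn (N+1)) (t : ℝ), 0 < t →
    ENNReal.ofReal (t ^ ((N:ℝ)+1)) ≤ K * volume (closedBall w t ∩ S) →
    ∀ F : Rn (N+1) → ℝ, (∀ᵐ x ∂volume.restrict (closedBall w t ∩ S), F x = 0) →
    ∀ P : MvPolynomial (Fin (N+1)) ℝ, P.totalDegree ≤ m → ∀ y ∈ closedBall w t,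
      ‖MvPolynomial.eval y P‖ₑ ≤ C * av (fun z => F z - MvPolynomial.eval z P) w t := by
  obtain ⟨C, hC⟩ := markov N m (d := (N:ℝ)+1) (by linarith) (K + 2 ^ (N+1)) (by simp [hK])
  refine ⟨C * 2 ^ (N+1), fun S hS w t ht h F hF P hP y hy => ?_⟩
  have h1 := hC (volume.restrict S) w t ht ⟨fun x r hr hrt => ?_, ?_⟩ P hP y hy
  · refine h1.trans ?_
    have e : ∫⁻ z in closedBall w t, ‖MvPolynomial.eval z P‖ₑ ∂volume.restrict S ≤
        ∫⁻ z in closedBall w t, ‖F z - MvPolynomial.eval z P‖ₑ := by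
      rw [Measure.restrict_restrict measurableSet_closedBall]
      calc _ = ∫⁻ z in closedBall w t ∩ S, ‖F z - MvPolynomial.eval z P‖ₑ := by
            refine lintegral_congr_ae (hF.mono fun z hz => ?_)
            simp [hz]
        _ ≤ _ := lintegral_mono_set inter_subset_left
    unfold av
    rw [vol_cb' w ht.le, ENNReal.mul_inv (by simp) (by simp)]
    push_cast
    calc (C:ℝ≥0∞) * ((ENNReal.ofReal (t ^ ((N:ℝ)+1)))⁻¹ * ∫⁻ z in closedBall w t, ‖MvPolynomial.eval z P‖ₑ ∂volume.restrict S)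
        ≤ C * ((ENNReal.ofReal (t ^ ((N:ℝ)+1)))⁻¹ * ∫⁻ z in closedBall w t, ‖F z - MvPolynomial.eval z P‖ₑ) := by
          gcongr
      _ = C * ((2 ^ (N+1) * (2 ^ (N+1))⁻¹) * (ENNReal.ofReal (t ^ ((N:ℝ)+1)))⁻¹ * ∫⁻ z in closedBall w t, ‖F z - MvPolynomial.eval z P‖ₑ) := by
          rw [ENNReal.mul_inv_cancel (by simp) (by simp), one_mul]
      _ = _ := by ring
  · refine (Measure.restrict_le_self _).trans ?_
    rw [vol_cb' x hr.le]
    gcongr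
    exact le_add_self
  · rw [Measure.restrict_apply measurableSet_closedBall]
    refine h.trans ?_
    gcongr
    exact le_self_add

structure Geo {N : ℕ} (Ω : Set (Rn (N+1))) (d : ℝ) (K : ℝ≥0) (ν : Measure (Rn (N+1))) : Prop where
  op : IsOpen Ω
  hd1 : N < d
  hd2 : d < N + 1
  up : ∀ x r, 0 < r → r ≤ 1/2 → ν (closedBall x r) ≤ K * ENNReal.ofReal (r ^ d)
  low : ∀ w ∈ frontier Ω, ∀ r, 0 < r → r ≤ 1 → ENNReal.ofReal (r ^ d) ≤ K * ν (closedBall w r)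
  vol : ∀ w ∈ frontier Ω, ∀ r, 0 < r → r ≤ 1 →
    ENNReal.ofReal (r ^ ((N:ℝ)+1)) ≤ K * volume (closedBall w r ∩ Ω)
  supp : ∀ᵐ w ∂ν, w ∈ frontier Ω
  sf : SFinite ν

section
variable {N : ℕ} {Ω : Set (Rn (N+1))} {d : ℝ} {K : ℝ≥0} {ν : Measure (Rn (N+1))}

lemma chain (hG : Geo Ω d K ν) (m : ℕ) : ∃ C C1 : ℝ≥0, ∀ F : Rn (N+1) → ℝ, Measurable F →
    ∀ w ∈ frontier Ω, ∀ M : ℕ, (∀ᵐ x ∂volume.restrict (closedBall w (R M) ∩ Ω), F x = 0) →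
    ∀ j, ∀ P : MvPolynomial (Fin (N+1)) ℝ, P.totalDegree ≤ m →
    ‖MvPolynomial.eval w P‖ₑ ≤ C * av (fun z => F z - MvPolynomial.eval z P) w (R j) +
      C1 * ∑' l, EE m F w (R (j + l)) := by
  obtain ⟨C, hC⟩ := markov_av N m (K + 1) (by simp)
  set D : ℝ≥0∞ := ENNReal.ofReal (2 ^ (N+1)) with hD
  have hD1 : (1:ℝ≥0∞) ≤ D := by
    rw [hD, ENNReal.one_le_ofReal]; exact one_le_pow₀ (by norm_num)
  have hDt : D ≠ ⊤ := by simp [hD]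
  refine ⟨C * D.toNNReal, C + C * D.toNNReal, fun F hF w hw M hM => ?_⟩
  push_cast
  rw [ENNReal.coe_toNNReal hDt]
  have hbase : ∀ j, M ≤ j → ∀ P : MvPolynomial (Fin (N+1)) ℝ, P.totalDegree ≤ m →
      ‖MvPolynomial.eval w P‖ₑ ≤ C * av (fun z => F z - MvPolynomial.eval z P) w (R j) := by
    intro j hj P hP
    refine hC Ω hG.op.measurableSet w (R j) (R_pos j) ?_ F ?_ P hP w (mem_closedBall_self (R_pos j).le)
    · refine (hG.vol w hw (R j) (R_pos j) (R_le_one j)).trans ?_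
      gcongr
      exact le_self_add
    · exact ae_restrict_of_ae_restrict_of_subset
        (inter_subset_inter_left _ (closedBall_subset_closedBall (R_anti hj))) hM
  have hvol : ∀ j, ∀ P : MvPolynomial (Fin (N+1)) ℝ, P.totalDegree ≤ m →
      ‖MvPolynomial.eval w P‖ₑ ≤ C * av (fun z => MvPolynomial.eval z P) w (R j) := by
    intro j P hP
    have := hC univ MeasurableSet.univ w (R j) (R_pos j) ?_ (fun _ => 0) (by simp) P hP w
      (mem_closedBall_self (R_pos j).le)
    · rw [av_sub_comm] at this
      simpa using this
    · rw [inter_univ, vol_cb' w (R_pos j).le, ← mul_assoc]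
      refine le_mul_of_one_le_left' ?_
      refine one_le_mul_of_one_le_of_one_le ?_ (one_le_pow₀ (by norm_num))
      exact le_add_self
  have main : ∀ k j, M ≤ j + k → ∀ P : MvPolynomial (Fin (N+1)) ℝ, P.totalDegree ≤ m →
    ‖MvPolynomial.eval w P‖ₑ ≤ C * D * av (fun z => F z - MvPolynomial.eval z P) w (R j) +
      (C + C * D) * ∑' l, EE m F w (R (j + 1 + l)) := by
    intro k
    induction k with
    | zero =>
      intro j hj P hP
      refine (hbase j hj P hP).trans (le_trans ?_ le_self_add)
      gcongr
      exact le_mul_of_one_le_right' hD1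
    | succ k ih =>
      intro j hj P hP
      have key : ‖MvPolynomial.eval w P‖ₑ ≤
          (C * D * av (fun z => F z - MvPolynomial.eval z P) w (R j) +
            (C + C * D) * ∑' l, EE m F w (R (j + 1 + 1 + l))) + (C + C * D) * EE m F w (R (j+1)) := by
        refine av_le_of_EE (by simp [ENNReal.mul_eq_top, hDt]) fun P' hP' => ?_
        have h1 := ih (j+1) (by omega) P' hP'
        have h2 := hvol (j+1) (P - P') ((MvPolynomial.totalDegree_sub _ _).trans (max_le hP hP'))
        have h3 : av (fun z => MvPolynomial.eval z (P - P')) w (R (j+1)) ≤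
            av (fun z => F z - MvPolynomial.eval z P') w (R (j+1)) +
            D * av (fun z => F z - MvPolynomial.eval z P) w (R j) := by
          have e : (fun z => MvPolynomial.eval z (P - P')) = fun z =>
              (F z - MvPolynomial.eval z P') + (- (F z - MvPolynomial.eval z P)) := by
            funext z; simp
          rw [e]
          refine (av_add_le (hF.sub (poly_cont _).measurable)).trans ?_
          rw [av_neg]
          refine add_le_add le_rfl (av_mono (R_pos _) (R_pos _) (by norm_num) ?_ ?_)
          · simpa using R_anti (Nat.le_succ j)
          · rw [R_succ]; linarith
        calc ‖MvPolynomial.eval w P‖ₑ = ‖MvPolynomial.eval w P' + MvPolynomial.eval w (P - P')‖ₑ := by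
              simp
          _ ≤ _ := enorm_add_le _ _
          _ ≤ _ := add_le_add h1 (h2.trans (mul_le_mul_right h3 _))
          _ = _ := by ring
      refine key.trans (le_of_eq ?_)
      rw [add_assoc, ← mul_add]
      congr 2
      rw [tsum_eq_zero_add' (f := fun l => EE m F w (R (j + 1 + l))) ENNReal.summable, add_comm]
      have : ∀ l, j + 1 + 1 + l = j + 1 + (l + 1) := fun l => by omega
      simp_rw [this]
  intro j P hP
  refine (main M j (by omega) P hP).trans ?_
  refine add_le_add le_rfl (mul_le_mul_right ?_ _)
  have : ∀ l, j + 1 + l = j + (l + 1) := fun l => by omega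
  simp_rw [this]
  exact ENNReal.tsum_comp_le_tsum_of_injective (add_left_injective 1) (fun l => EE m F w (R (j + l)))
end

def Adm {n : ℕ} (Ω : Set (Rn n)) (φ F : Rn n → ℝ) : Prop :=
  Measurable φ ∧ Measurable F ∧ (∀ x ∉ Ω, φ x = 0) ∧
    (∃ t0 > 0, ∀ w ∈ frontier Ω, ∀ y ∈ closedBall w t0, φ y = 0) ∧
    (∀ᵐ x ∂volume.restrict Ω, F x = φ x)

lemma adm_le {n : ℕ} {Ω : Set (Rn n)} (ho : IsOpen Ω) {φ F : Rn n → ℝ} (h : Adm Ω φ F) :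
    ∀ᵐ x, ‖φ x‖ₑ ≤ ‖F x‖ₑ := by
  have := (ae_restrict_iff' ho.measurableSet).1 h.2.2.2.2
  filter_upwards [this] with x hx
  by_cases h1 : x ∈ Ω
  · rw [hx h1]
  · simp [h.2.2.1 x h1]

section
variable {N : ℕ} {Ω : Set (Rn (N+1))} {d : ℝ} {K : ℝ≥0} {ν : Measure (Rn (N+1))}

lemma Abound (hG : Geo Ω d K ν) (m : ℕ) : ∃ C : ℝ≥0, ∀ φ F : Rn (N+1) → ℝ, Adm Ω φ F →
    ∀ w ∈ frontier Ω, ∀ j, av φ w (R (j+1)) ≤ C * (EE m F w (R j) +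
      W d (j+1) * ∫⁻ w' in closedBall w (R (j+1)), ∑' l, EE m F w' (R (j+1+l)) ∂ν) := by
  obtain ⟨C, C1, hC⟩ := chain hG m
  obtain ⟨C2, hC2⟩ := markov N m hG.hd1 (K : ℝ≥0∞) (by simp)
  set D : ℝ≥0 := 2 ^ (N+1) with hD
  have hD' : ENNReal.ofReal (2 ^ (N+1)) = D := by
    rw [ENNReal.ofReal_pow (by norm_num)]; simp [D]
  refine ⟨(D + C2 * (C * D * K)) + C2 * C1, fun φ F hA w hw j => ?_⟩
  obtain ⟨hφ, hF, h0, ⟨t0, ht0, hφ0⟩, hae⟩ := id hA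
  obtain ⟨M, hM⟩ : ∃ M, R M < t0 := exists_pow_lt_of_lt_one ht0 (by norm_num)
  have hz : ∀ w ∈ frontier Ω, ∀ᵐ x ∂volume.restrict (closedBall w (R M) ∩ Ω), F x = 0 := by
    intro w hw
    have h1 := ae_restrict_of_ae_restrict_of_subset (t := Ω)
      (inter_subset_right (s := closedBall w (R M))) hae
    filter_upwards [h1, ae_restrict_mem (measurableSet_closedBall.inter hG.op.measurableSet)] with x hx hx2
    rw [hx]
    exact hφ0 w hw x (closedBall_subset_closedBall hM.le hx2.1)
  set I := ∫⁻ w' in closedBall w (R (j+1)), ∑' l, EE m F w' (R (j+1+l)) ∂ν with hI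
  have hRh : R (j+1) ≤ 1/2 := by
    rw [R_succ]; have := R_le_one j; linarith
  have key : av φ w (R (j+1)) ≤ C2 * (C1 * (W d (j+1) * I)) + ((D + C2 * (C * D * K) : ℝ≥0) : ℝ≥0∞) * EE m F w (R j) := by
    refine av_le_of_EE ENNReal.coe_ne_top fun P hP => ?_
    set X := av (fun y => F y - MvPolynomial.eval y P) w (R j) with hX
    have s1 : ∀ w' ∈ closedBall w (R (j+1)), av (fun y => F y - MvPolynomial.eval y P) w' (R (j+1)) ≤ D * X := by
      intro w' hw'
      rw [← hD']
      refine av_mono (R_pos _) (R_pos _) (by norm_num) ?_ ?_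
      · rw [mem_closedBall] at hw'
        have := R_succ j
        linarith
      · rw [R_succ]; linarith
    have s2 : ∀ y ∈ closedBall w (R (j+1)), ‖MvPolynomial.eval y P‖ₑ ≤
        C2 * (C * D * K * X + C1 * (W d (j+1) * I)) := by
      intro y hy
      refine (hC2 ν w (R (j+1)) (R_pos _) ⟨fun x r hr hrt => hG.up x r hr (hrt.trans hRh),
        hG.low w hw _ (R_pos _) (R_le_one _)⟩ P hP y hy).trans ?_
      rw [ofReal_R, W_inv, neg_neg]
      gcongr
      calc W d (j+1) * ∫⁻ z in closedBall w (R (j+1)), ‖MvPolynomial.eval z P‖ₑ ∂ν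
          ≤ W d (j+1) * ∫⁻ z in closedBall w (R (j+1)), (C * (D * X) + C1 * ∑' l, EE m F z (R (j+1+l))) ∂ν := by
            gcongr 1
            refine lintegral_mono_ae ?_
            filter_upwards [ae_restrict_of_ae hG.supp, ae_restrict_mem measurableSet_closedBall] with z hz1 hz2
            refine (hC F hF z hz1 M (hz z hz1) (j+1) P hP).trans ?_
            gcongr
            exact s1 z hz2
        _ = W d (j+1) * (C * (D * X) * ν (closedBall w (R (j+1))) + C1 * I) := by
            have hmS : Measurable (fun z => ∑' l, EE m F z (R (j+1+l))) :=
              Measurable.tsum fun l => measurable_EE_x hF _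
            rw [lintegral_add_left measurable_const, lintegral_const_mul _ hmS, lintegral_const,
              Measure.restrict_apply_univ]
        _ ≤ W d (j+1) * (C * (D * X) * (K * W (-d) (j+1)) + C1 * I) := by
            gcongr
            have := hG.up w (R (j+1)) (R_pos _) hRh
            rwa [ofReal_R] at this
        _ = (W d (j+1) * W (-d) (j+1)) * (C * D * K * X) + C1 * (W d (j+1) * I) := by ring
        _ = _ := by rw [W_mul]; simp [W_zero']
    have s3 : av φ w (R (j+1)) ≤ av F w (R (j+1)) := by
      unfold av
      gcongr 1
      exact lintegral_mono_ae (ae_restrict_of_ae (adm_le hG.op hA))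
    have s4 : av (fun y => MvPolynomial.eval y P) w (R (j+1)) ≤ C2 * (C * D * K * X + C1 * (W d (j+1) * I)) := by
      unfold av
      rw [ENNReal.inv_mul_le_iff (measure_closedBall_pos _ _ (R_pos _)).ne' measure_closedBall_lt_top.ne]
      refine (setLIntegral_mono measurable_const s2).trans ?_
      simp [mul_comm]
    have s5 : av F w (R (j+1)) ≤ av (fun y => F y - MvPolynomial.eval y P) w (R (j+1)) +
        av (fun y => MvPolynomial.eval y P) w (R (j+1)) := by
      have := av_add_le (F := fun y => F y - MvPolynomial.eval y P) (G := fun y => MvPolynomial.eval y P)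
        (hF.sub (poly_cont P).measurable) (x := w) (t := R (j+1))
      simpa using this
    refine s3.trans (s5.trans ((add_le_add (s1 w (mem_closedBall_self (R_pos _).le)) s4).trans (le_of_eq ?_)))
    push_cast
    ring
  refine key.trans ?_
  push_cast
  rw [add_comm, mul_add]
  refine add_le_add ?_ ?_
  · exact mul_le_mul_left le_self_add _
  · rw [← mul_assoc]
    exact mul_le_mul_left le_add_self _
end

lemma tonelli_ball {n : ℕ} (μ ν : Measure (Rn n)) [SFinite μ] [SFinite ν] {f : Rn n → ℝ≥0∞}
    (hf : Measurable f) (r : ℝ) :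
    ∫⁻ x, ∫⁻ y in closedBall x r, f y ∂ν ∂μ = ∫⁻ y, f y * μ (closedBall y r) ∂ν := by
  have e : ∀ x, ∫⁻ y in closedBall x r, f y ∂ν =
      ∫⁻ y, {z : Rn n × Rn n | dist z.2 z.1 ≤ r}.indicator (fun z => f z.2) (x, y) ∂ν := by
    intro x
    rw [← lintegral_indicator measurableSet_closedBall]; rfl
  simp_rw [e]
  have hms : MeasurableSet {z : Rn n × Rn n | dist z.2 z.1 ≤ r} :=
    measurableSet_le (by fun_prop) (by fun_prop)
  have hm : Measurable ({z : Rn n × Rn n | dist z.2 z.1 ≤ r}.indicator (fun z => f z.2)) :=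
    Measurable.indicator (by fun_prop) hms
  rw [lintegral_lintegral_swap
    (f := fun x y => {z : Rn n × Rn n | dist z.2 z.1 ≤ r}.indicator (fun z => f z.2) (x, y))
    (show AEMeasurable (Function.uncurry fun x y =>
      {z : Rn n × Rn n | dist z.2 z.1 ≤ r}.indicator (fun z => f z.2) (x, y)) _ from hm.aemeasurable)]
  refine lintegral_congr fun y => ?_
  have e2 : ∀ x, {z : Rn n × Rn n | dist z.2 z.1 ≤ r}.indicator (fun z => f z.2) (x, y) =
      (closedBall y r).indicator (fun _ => f y) x := by
    intro x
    by_cases h : dist x y ≤ r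
    · rw [indicator_of_mem (by simpa [dist_comm] using h), indicator_of_mem (by simpa using h)]
    · rw [indicator_of_notMem (by simpa [dist_comm] using h), indicator_of_notMem (by simpa using h)]
  simp_rw [e2]
  rw [lintegral_indicator measurableSet_closedBall]
  simp

lemma measurable_ball_int {n : ℕ} (ν : Measure (Rn n)) [SFinite ν] {f : Rn n → ℝ≥0∞}
    (hf : Measurable f) (r : ℝ) : Measurable (fun x => ∫⁻ y in closedBall x r, f y ∂ν) := by
  have e : ∀ x, ∫⁻ y in closedBall x r, f y ∂ν =
      ∫⁻ y, {z : Rn n × Rn n | dist z.2 z.1 ≤ r}.indicator (fun z => f z.2) (x, y) ∂ν := by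
    intro x
    rw [← lintegral_indicator measurableSet_closedBall]; rfl
  simp_rw [e]
  have hms : MeasurableSet {z : Rn n × Rn n | dist z.2 z.1 ≤ r} :=
    measurableSet_le (by fun_prop) (by fun_prop)
  have hm : Measurable ({z : Rn n × Rn n | dist z.2 z.1 ≤ r}.indicator (fun z => f z.2)) :=
    Measurable.indicator (by fun_prop) hms
  exact hm.lintegral_prod_right'

section
variable {N : ℕ} {Ω : Set (Rn (N+1))} {d : ℝ} {K : ℝ≥0} {ν : Measure (Rn (N+1))}

lemma Abound_p (hG : Geo Ω d K ν) (m : ℕ) {p γ : ℝ} (hp : 1 < p) (hγ : 0 < γ) :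
    ∃ C : ℝ≥0, ∀ φ F : Rn (N+1) → ℝ, Adm Ω φ F → ∀ j,
      ∫⁻ w, av φ w (R (j+1)) ^ p ∂ν ≤ C * ∑' l, W γ l * ∫⁻ w, EE m F w (R (j+l)) ^ p ∂ν := by
  have hp0 : 0 < p := by linarith
  have := hG.sf
  obtain ⟨C, hC⟩ := Abound hG m
  obtain ⟨Cγ, hCγ⟩ := generic hp hγ
  refine ⟨C ^ p * (2 ^ (p-1) * (1 + K ^ (p-1) * K * Cγ)), fun φ F hA j => ?_⟩
  have hF := hA.2.1
  set S : Rn (N+1) → ℝ≥0∞ := fun w' => ∑' l, EE m F w' (R (j+1+l)) with hS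
  have hSm : Measurable S := Measurable.tsum fun l => measurable_EE_x hF _
  have hRh : R (j+1) ≤ 1/2 := by
    rw [R_succ]; have := R_le_one j; linarith
  have hup : ∀ w, ν (closedBall w (R (j+1))) ≤ K * W (-d) (j+1) := fun w => by
    have := hG.up w (R (j+1)) (R_pos _) hRh
    rwa [ofReal_R] at this
  have h1 : ∀ w ∈ frontier Ω, av φ w (R (j+1)) ^ p ≤ C ^ p * (2 ^ (p-1) * (EE m F w (R j) ^ p +
      K ^ (p-1) * (W d (j+1) * ∫⁻ w' in closedBall w (R (j+1)), S w' ^ p ∂ν))) := by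
    intro w hw
    refine (ENNReal.rpow_le_rpow (hC φ F hA w hw j) hp0.le).trans ?_
    rw [ENNReal.mul_rpow_of_nonneg _ _ hp0.le]
    gcongr
    refine (ENNReal.rpow_add_le_mul_rpow_add_rpow _ _ hp.le).trans ?_
    gcongr
    have := jensenK (ν.restrict (closedBall w (R (j+1)))) hp hSm.aemeasurable
      (W_ne_zero (-d) (j+1)) (W_ne_top _ _) (K := K) (by simpa using hup w)
    rwa [W_inv, neg_neg] at this
  have hSp : ∫⁻ w, S w ^ p ∂ν ≤ Cγ * ∑' l, W γ l * ∫⁻ w, EE m F w (R (j+l)) ^ p ∂ν := by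
    calc ∫⁻ w, S w ^ p ∂ν ≤ ∫⁻ w, Cγ * ∑' l, W γ l * EE m F w (R (j+1+l)) ^ p ∂ν :=
          lintegral_mono fun w => hCγ _
      _ = Cγ * ∑' l, W γ l * ∫⁻ w, EE m F w (R (j+1+l)) ^ p ∂ν := by
          have hm : ∀ l, Measurable (fun w => W γ l * EE m F w (R (j+1+l)) ^ p) := fun l =>
            ((measurable_EE_x hF _).pow_const _).const_mul _
          rw [lintegral_const_mul _ (Measurable.tsum hm), lintegral_tsum fun l => (hm l).aemeasurable]
          congr 2
          funext l
          rw [lintegral_const_mul _ ((measurable_EE_x hF _).pow_const _)]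
      _ ≤ _ := by
          refine mul_le_mul_right ?_ _
          refine le_trans (ENNReal.tsum_le_tsum fun l => ?_) (ENNReal.tsum_comp_le_tsum_of_injective
            (add_left_injective 1) (fun l => W γ l * ∫⁻ w, EE m F w (R (j+l)) ^ p ∂ν))
          have e : j + 1 + l = j + (l + 1) := by omega
          simp only [e]
          exact mul_le_mul_left (W_mono hγ.le (Nat.le_succ l)) _
  have hN0 : ∫⁻ w, EE m F w (R j) ^ p ∂ν ≤ ∑' l, W γ l * ∫⁻ w, EE m F w (R (j+l)) ^ p ∂ν := by
    refine le_trans (le_of_eq ?_) (ENNReal.le_tsum 0)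
    simp [W_zero]
  have hT : ∫⁻ w, ∫⁻ w' in closedBall w (R (j+1)), S w' ^ p ∂ν ∂ν ≤ K * W (-d) (j+1) * ∫⁻ w, S w ^ p ∂ν := by
    rw [tonelli_ball ν ν (hSm.pow_const p)]
    rw [← lintegral_const_mul _ (hSm.pow_const p)]
    refine lintegral_mono fun w => ?_
    rw [mul_comm]
    exact mul_le_mul_left (hup w) _
  set T : ℝ≥0∞ := ∑' l, W γ l * ∫⁻ w, EE m F w (R (j+l)) ^ p ∂ν
  have hmI : Measurable (fun w => ∫⁻ w' in closedBall w (R (j+1)), S w' ^ p ∂ν) :=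
    measurable_ball_int ν (hSm.pow_const p) _
  calc ∫⁻ w, av φ w (R (j+1)) ^ p ∂ν ≤ ∫⁻ w, C ^ p * (2 ^ (p-1) * (EE m F w (R j) ^ p +
      K ^ (p-1) * (W d (j+1) * ∫⁻ w' in closedBall w (R (j+1)), S w' ^ p ∂ν))) ∂ν :=
        lintegral_mono_ae (hG.supp.mono h1)
    _ = C ^ p * (2 ^ (p-1) * (∫⁻ w, EE m F w (R j) ^ p ∂ν +
      K ^ (p-1) * (W d (j+1) * ∫⁻ w, ∫⁻ w' in closedBall w (R (j+1)), S w' ^ p ∂ν ∂ν))) := by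
        have hme := (measurable_EE_x (m := m) hF (R j)).pow_const p
        rw [lintegral_const_mul, lintegral_const_mul, lintegral_add_left, lintegral_const_mul, lintegral_const_mul]
        all_goals fun_prop
    _ ≤ C ^ p * (2 ^ (p-1) * (T + K ^ (p-1) * (W d (j+1) * (K * W (-d) (j+1) * (Cγ * T))))) := by
        gcongr
        exact hT.trans (mul_le_mul_right hSp _)
    _ = C ^ p * (2 ^ (p-1) * (T + K ^ (p-1) * ((W d (j+1) * W (-d) (j+1)) * K * (Cγ * T)))) := by ring
    _ = C ^ p * (2 ^ (p-1) * (1 + K ^ (p-1) * K * Cγ)) * T := by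
        rw [W_mul, add_neg_cancel, W_zero']; ring
    _ = _ := by
        congr 1
        rw [ENNReal.coe_mul, ENNReal.coe_rpow_of_nonneg _ hp0.le]
        congr 1
        rw [ENNReal.coe_mul, ENNReal.coe_rpow_of_nonneg _ (by linarith)]
        push_cast
        rw [ENNReal.coe_rpow_of_nonneg _ (by linarith)]
end

lemma conv_sum {τ : ℝ} (hτ : 0 < τ) : ∃ C : ℝ≥0, ∀ N : ℕ → ℝ≥0∞,
    ∑' i, W τ i * ∑' l, W (τ/2) l * N (i + l) ≤ C * ∑' k, W τ k * N k := by
  have hs : ∑' j, W (-(τ/2)) j ≠ ⊤ := W_sum (by linarith)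
  lift (∑' j, W (-(τ/2)) j) to ℝ≥0 using hs with C hC
  refine ⟨C, fun N => ?_⟩
  calc ∑' i, W τ i * ∑' l, W (τ/2) l * N (i + l)
      = ∑' i, ∑' l, W (-(τ/2)) l * (W τ (i+l) * N (i + l)) := by
        congr 1; funext i
        rw [← ENNReal.tsum_mul_left]
        congr 1; funext l
        rw [W_add, show -(τ/2) = -τ + τ/2 by ring, ← W_mul]
        have : W (-τ) l * W τ l = 1 := by rw [W_mul]; simp [W_zero']
        calc _ = 1 * (W τ i * (W (τ/2) l * N (i+l))) := by ring
          _ = _ := by rw [← this]; ring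
    _ = ∑' l, ∑' i, W (-(τ/2)) l * (W τ (i+l) * N (i + l)) := ENNReal.tsum_comm
    _ = ∑' l, W (-(τ/2)) l * ∑' i, (W τ (i+l) * N (i + l)) := by
        congr 1; funext l; rw [ENNReal.tsum_mul_left]
    _ ≤ ∑' l, W (-(τ/2)) l * ∑' k, W τ k * N k := by
        refine ENNReal.tsum_le_tsum fun l => mul_le_mul_right ?_ _
        exact ENNReal.tsum_comp_le_tsum_of_injective (add_left_injective l) (fun k => W τ k * N k)
    _ = _ := by rw [ENNReal.tsum_mul_right, hC]

section
variable {N : ℕ} {Ω : Set (Rn (N+1))} {d : ℝ} {K : ℝ≥0} {ν : Measure (Rn (N+1))}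

lemma Asum (hG : Geo Ω d K ν) (m : ℕ) {p τ : ℝ} (hp : 1 < p) (hτ : 0 < τ) :
    ∃ C : ℝ≥0, ∀ φ F : Rn (N+1) → ℝ, Adm Ω φ F →
      ∑' i, W τ i * ∫⁻ w, av φ w (R (i+4)) ^ p ∂ν ≤
        C * ∑' k, W τ k * ∫⁻ w, EE m F w (R (k+3)) ^ p ∂ν := by
  obtain ⟨C, hC⟩ := Abound_p hG m hp (half_pos hτ)
  obtain ⟨C', hC'⟩ := conv_sum hτ
  refine ⟨C * C', fun φ F hA => ?_⟩
  calc _ ≤ ∑' i, C * (W τ i * ∑' l, W (τ/2) l * ∫⁻ w, EE m F w (R (i+l+3)) ^ p ∂ν) := by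
        refine ENNReal.tsum_le_tsum fun i => ?_
        rw [mul_left_comm]
        refine mul_le_mul_right ((hC φ F hA (i+3)).trans (le_of_eq ?_)) _
        congr 2; funext l
        rw [show i + 3 + l = i + l + 3 by omega]
    _ ≤ _ := by
        rw [ENNReal.tsum_mul_left, ENNReal.coe_mul, mul_assoc]
        exact mul_le_mul_right (hC' (fun k => ∫⁻ w, EE m F w (R (k+3)) ^ p ∂ν)) _

lemma low_thick (hG : Geo Ω d K ν) {x : Rn (N+1)} {ρ : ℝ} (h0 : 0 < ρ) (h1 : ρ ≤ 1)
    (hx : x ∈ cthickening ρ (frontier Ω)) :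
    ENNReal.ofReal (ρ ^ d) ≤ K * ν (closedBall x (3 * ρ)) := by
  have : x ∈ thickening (2 * ρ) (frontier Ω) :=
    cthickening_subset_thickening' (by linarith) (by linarith) _ hx
  rw [mem_thickening_iff] at this
  obtain ⟨w, hw, hxw⟩ := this
  refine (hG.low w hw ρ h0 h1).trans (mul_le_mul_right (measure_mono ?_) _)
  exact closedBall_subset_closedBall' (by rw [dist_comm]; linarith)

lemma vol3 (x : Rn (N+1)) (j : ℕ) : volume (closedBall x (3 * R j)) = 6 ^ (N+1) * W (-((N:ℝ)+1)) j := by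
  rw [vol_cb' x (by have := R_pos j; positivity), Real.mul_rpow (by norm_num) (R_pos j).le,
    ENNReal.ofReal_mul (by positivity), ofReal_R, ← mul_assoc]
  congr 1
  rw [show (6:ℝ≥0∞) = 2 * 3 by norm_num, mul_pow]
  congr 1
  rw [show ((N:ℝ)+1) = ((N+1 : ℕ) : ℝ) by push_cast; rfl, Real.rpow_natCast,
    ENNReal.ofReal_pow (by norm_num)]
  norm_num

lemma near (hG : Geo Ω d K ν) {p : ℝ} (hp : 1 < p) :
    ∃ C : ℝ≥0, ∀ φ : Rn (N+1) → ℝ, Measurable φ → ∀ i l,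
      ∫⁻ x in cthickening (R (i+6+l)) (frontier Ω), av φ x (R (i+6)) ^ p ≤
        C * (W (d - ((N:ℝ)+1)) (i+6+l) * ∫⁻ w, av φ w (R (i+4)) ^ p ∂ν) := by
  have := hG.sf
  have hp0 : 0 < p := by linarith
  refine ⟨K * (4 ^ (N+1)) ^ p * 6 ^ (N+1), fun φ hφ i l => ?_⟩
  set j := i+6+l with hj
  set U := cthickening (R j) (frontier Ω)
  have hU : MeasurableSet U := isClosed_cthickening.measurableSet
  have hR : R j ≤ R (i+6) := R_anti (by omega)
  have h4 : R (i+4) = 4 * R (i+6) := by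
    rw [show i + 6 = i+4+1+1 by omega, R_succ (i+4+1), R_succ (i+4)]; ring
  have hm4 : Measurable fun w => av φ w (R (i+4)) ^ p := (measurable_av_x hφ _).pow_const _
  have hpt : ∀ x ∈ U, W (-d) j * av φ x (R (i+6)) ^ p ≤
      K * (4 ^ (N+1)) ^ p * ∫⁻ w in closedBall x (3 * R j), av φ w (R (i+4)) ^ p ∂ν := by
    intro x hx
    have hl := low_thick hG (R_pos j) (R_le_one j) hx
    rw [ofReal_R] at hl
    calc W (-d) j * av φ x (R (i+6)) ^ p ≤ K * ν (closedBall x (3 * R j)) * av φ x (R (i+6)) ^ p :=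
          mul_le_mul_left hl _
      _ = K * ∫⁻ w in closedBall x (3 * R j), av φ x (R (i+6)) ^ p ∂ν := by
          rw [lintegral_const, Measure.restrict_apply_univ]; ring
      _ ≤ K * ∫⁻ w in closedBall x (3 * R j), (4 ^ (N+1)) ^ p * av φ w (R (i+4)) ^ p ∂ν := by
          refine mul_le_mul_right (setLIntegral_mono' measurableSet_closedBall fun w hw => ?_) _
          rw [← ENNReal.mul_rpow_of_nonneg _ _ hp0.le]
          refine ENNReal.rpow_le_rpow ?_ hp0.le
          have := av_mono (F := φ) (x := x) (y := w) (t := R (i+6)) (r := R (i+4)) (c := 4) (R_pos _) (R_pos _)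
            (by norm_num) (by rw [mem_closedBall'] at hw; linarith) h4.le
          rwa [ENNReal.ofReal_pow (by norm_num), ENNReal.ofReal_ofNat] at this
      _ = _ := by rw [lintegral_const_mul _ hm4]; ring
  have key : W (-d) j * ∫⁻ x in U, av φ x (R (i+6)) ^ p ≤
      K * (4 ^ (N+1)) ^ p * (6 ^ (N+1) * W (-((N:ℝ)+1)) j * ∫⁻ w, av φ w (R (i+4)) ^ p ∂ν) := by
    calc _ = ∫⁻ x in U, W (-d) j * av φ x (R (i+6)) ^ p := by
          rw [lintegral_const_mul _ ((measurable_av_x hφ _).pow_const _)]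
      _ ≤ ∫⁻ x in U, K * (4 ^ (N+1)) ^ p * ∫⁻ w in closedBall x (3 * R j), av φ w (R (i+4)) ^ p ∂ν :=
          setLIntegral_mono' hU hpt
      _ ≤ ∫⁻ x, K * (4 ^ (N+1)) ^ p * ∫⁻ w in closedBall x (3 * R j), av φ w (R (i+4)) ^ p ∂ν :=
          setLIntegral_le_lintegral _ _
      _ = K * (4 ^ (N+1)) ^ p * ∫⁻ w, av φ w (R (i+4)) ^ p * (6 ^ (N+1) * W (-((N:ℝ)+1)) j) ∂ν := by
          rw [lintegral_const_mul _ (measurable_ball_int ν hm4 _), tonelli_ball volume ν hm4]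
          simp_rw [vol3]
      _ = _ := by
          rw [lintegral_mul_const _ hm4]; ring
  calc ∫⁻ x in U, av φ x (R (i+6)) ^ p = W d j * (W (-d) j * ∫⁻ x in U, av φ x (R (i+6)) ^ p) := by
        rw [← mul_assoc, W_mul]; simp [W_zero']
    _ ≤ _ := mul_le_mul_right key _
    _ = _ := by
        rw [sub_eq_add_neg, ← W_mul]
        push_cast
        rw [ENNReal.coe_rpow_of_nonneg _ hp0.le]
        push_cast
        ring

lemma near_sum (hG : Geo Ω d K ν) {p s τ : ℝ} (hp : 1 < p) (hτ : s * p = τ + (N + 1 - d)) :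
    ∃ C : ℝ≥0, ∀ φ : Rn (N+1) → ℝ, Measurable φ →
      ∫⁻ x, (∑' i, {i | x ∈ cthickening (R (i+6)) (frontier Ω)}.indicator
        (fun i => W s i * av φ x (R (i+6))) i) ^ p ≤
        C * ∑' i, W τ i * ∫⁻ w, av φ w (R (i+4)) ^ p ∂ν := by
  have hp0 : 0 < p := by linarith
  have hδ : 0 < (N:ℝ) + 1 - d := by have := hG.hd2; linarith
  set δ := (N:ℝ) + 1 - d with hδd
  obtain ⟨C1, hC1⟩ := layer hp (half_pos hδ)
  obtain ⟨C2, hC2⟩ := near hG hp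
  have hs : ∑' j, W (-(δ/2)) j ≠ ⊤ := W_sum (by linarith)
  lift (∑' j, W (-(δ/2)) j) to ℝ≥0 using hs with C3 hC3
  refine ⟨C1 * C2 * C3, fun φ hφ => ?_⟩
  have hUm : ∀ j, MeasurableSet (cthickening (R j) (frontier Ω)) := fun j => isClosed_cthickening.measurableSet
  have ham : ∀ i, Measurable fun x => av φ x (R (i+6)) ^ p := fun i => (measurable_av_x hφ _).pow_const _
  have hanti : ∀ x : Rn (N+1), ∀ i j : ℕ, i ≤ j → x ∈ cthickening (R (j+6)) (frontier Ω) →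
      x ∈ cthickening (R (i+6)) (frontier Ω) := fun x i j hij hx =>
    cthickening_mono (R_anti (by omega)) _ hx
  calc _ ≤ ∫⁻ x, C1 * ∑' i, ∑' l, (W (s*p) i * W (δ/2) l) *
        (cthickening (R (i+6+l)) (frontier Ω)).indicator (fun x => av φ x (R (i+6)) ^ p) x := by
        refine lintegral_mono fun x => (hC1 _ (fun i => x ∈ cthickening (R (i+6)) (frontier Ω)) (hanti x)).trans ?_
        refine mul_le_mul_right (ENNReal.tsum_le_tsum fun i => ?_) _
        rw [← ENNReal.tsum_mul_left]
        refine ENNReal.tsum_le_tsum fun l => ?_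
        rw [ENNReal.mul_rpow_of_nonneg _ _ hp0.le, W_rpow, show i + 6 + l = i + l + 6 by omega]
        by_cases hx : x ∈ cthickening (R (i+l+6)) (frontier Ω)
        · rw [indicator_of_mem (by exact hx), indicator_of_mem hx]
          exact le_of_eq (by ring)
        · rw [indicator_of_notMem (by exact hx)]; simp
    _ = C1 * ∑' i, ∑' l, (W (s*p) i * W (δ/2) l) *
        ∫⁻ x in cthickening (R (i+6+l)) (frontier Ω), av φ x (R (i+6)) ^ p := by
        have hm : ∀ i l, Measurable fun x => (W (s*p) i * W (δ/2) l) *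
          (cthickening (R (i+6+l)) (frontier Ω)).indicator (fun x => av φ x (R (i+6)) ^ p) x :=
          fun i l => ((ham i).indicator (hUm _)).const_mul _
        rw [lintegral_const_mul _ (Measurable.tsum fun i => Measurable.tsum fun l => hm i l)]
        rw [lintegral_tsum fun i => (Measurable.tsum fun l => hm i l).aemeasurable]
        congr 2; funext i
        rw [lintegral_tsum fun l => (hm i l).aemeasurable]
        congr 1; funext l
        rw [lintegral_const_mul _ ((ham i).indicator (hUm _)), lintegral_indicator (hUm _)]
    _ ≤ C1 * ∑' i, ∑' l, C2 * (W (-(δ/2)) l * (W τ i * ∫⁻ w, av φ w (R (i+4)) ^ p ∂ν)) := by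
        refine mul_le_mul_right (ENNReal.tsum_le_tsum fun i => ENNReal.tsum_le_tsum fun l => ?_) _
        refine (mul_le_mul_right (hC2 φ hφ i l) _).trans ?_
        rw [mul_left_comm]
        refine mul_le_mul_right ?_ _
        rw [← mul_assoc, ← mul_assoc]
        refine mul_le_mul_left ?_ _
        have e1 : W (d - ((N:ℝ)+1)) (i+6+l) ≤ W (-δ) (i + l) := by
          rw [show d - ((N:ℝ)+1) = -δ by rw [hδd]; ring, ← W_inv, ← W_inv]
          exact ENNReal.inv_le_inv.2 (W_mono hδ.le (by omega))
        refine (mul_le_mul_right e1 _).trans (le_of_eq ?_)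
        have e2 : W τ i = W (τ+δ) i * W (-δ) i := by rw [W_mul]; congr 1; ring
        rw [W_add, hτ, show -(δ/2) = δ/2 + -δ by ring, ← W_mul (δ/2), e2]
        ring
    _ = _ := by
        simp_rw [ENNReal.tsum_mul_left, ENNReal.tsum_mul_right]
        rw [← hC3]; simp_rw [ENNReal.tsum_mul_left]; push_cast; ring
end

lemma overlap (a : ℕ) (U : ℕ → Prop) (hU : ∀ i j, i ≤ j → U j → U i) (X : ℝ≥0∞) :
    ∑' k, {k | U k ∧ ¬ U (k + a)}.indicator (fun _ => X) k ≤ a * X := by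
  classical
  by_cases h : ∃ k, U k ∧ ¬ U (k + a)
  · set k0 := Nat.find h with hk0
    have h0 := Nat.find_spec h
    rw [← hk0] at h0
    have : ∀ k, {k | U k ∧ ¬ U (k + a)}.indicator (fun _ => X) k ≤
        if k ∈ Finset.Ico k0 (k0 + a) then X else 0 := by
      intro k
      by_cases hk : U k ∧ ¬ U (k + a)
      · have h1 : k0 ≤ k := Nat.find_min' h hk
        have h2 : k < k0 + a := by
          by_contra hc
          exact h0.2 (hU _ _ (not_lt.1 hc) hk.1)
        rw [indicator_of_mem (by exact hk), if_pos (by simp [h1, h2])]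
      · rw [indicator_of_notMem (by exact hk)]; exact zero_le
    refine (ENNReal.tsum_le_tsum this).trans (le_of_eq ?_)
    rw [tsum_eq_sum (s := Finset.Ico k0 (k0+a)) (fun b hb => if_neg hb)]
    rw [Finset.sum_congr rfl fun b hb => if_pos hb]
    simp
  · push Not at h
    have : ∀ k, {k | U k ∧ ¬ U (k + a)}.indicator (fun _ => X) k = 0 := fun k =>
      indicator_of_notMem (by rintro ⟨h1, h2⟩; exact h2 (h k h1)) _
    simp [this]

lemma EE_GG {n m : ℕ} {s q : ℝ} (hs : 0 ≤ s) (hq : 1 ≤ q) {F : Rn n → ℝ} (x : Rn n) (k : ℕ) :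
    W s k * EE m F x (R (k+2)) ≤ 2 ^ (n+1) * GG m s q F x := by
  have hq0 : 0 < q := by linarith
  set I := Ioo (R (k+2)) (R (k+1)) with hI
  have hR := R_pos (k+2)
  have h2 : R (k+1) = 2 * R (k+2) := by rw [R_succ (k+1)]; ring
  have h1 : R (k+1) ≤ 1 := R_le_one _
  have hsub : I ⊆ Ioo (0:ℝ) 1 := fun t ht => ⟨hR.trans ht.1, ht.2.trans_le h1⟩
  set X := W s k * EE m F x (R (k+2))
  have hpt : ∀ t ∈ I, ((2 ^ n)⁻¹ * X) ^ q * ENNReal.ofReal (R (k+1))⁻¹ ≤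
      (ENNReal.ofReal (t ^ (-s)) * EE m F x t) ^ q * ENNReal.ofReal t⁻¹ := by
    intro t ht
    have ht0 : 0 < t := hR.trans ht.1
    refine mul_le_mul' (ENNReal.rpow_le_rpow ?_ hq0.le) (ENNReal.ofReal_le_ofReal ?_)
    · have e := EE_mono (m := m) (F := F) (x := x) (y := x) (t := R (k+2)) (r := t) (c := 2) hR ht0 (by norm_num)
        (by simpa using ht.1.le) (by have := ht.2; linarith)
      rw [ENNReal.ofReal_pow (by norm_num), ENNReal.ofReal_ofNat] at e
      have e' : (2 ^ n)⁻¹ * EE m F x (R (k+2)) ≤ EE m F x t :=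
        (ENNReal.inv_mul_le_iff (by simp) (by simp)).2 e
      have w : W s k ≤ ENNReal.ofReal (t ^ (-s)) := by
        have := ofReal_R (-s) k
        rw [neg_neg] at this
        rw [← this]
        refine ENNReal.ofReal_le_ofReal ?_
        exact Real.rpow_le_rpow_of_nonpos ht0 (ht.2.le.trans (R_anti (by omega))) (by linarith)
      calc _ = W s k * ((2 ^ n)⁻¹ * EE m F x (R (k+2))) := by ring
        _ ≤ _ := mul_le_mul' w e'
    · exact inv_anti₀ ht0 ht.2.le
  have hint : ((2 ^ n)⁻¹ * X) ^ q * 2⁻¹ ≤ ∫⁻ t in Set.Ioo (0:ℝ) 1,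
      (ENNReal.ofReal (t ^ (-s)) * EE m F x t) ^ q * ENNReal.ofReal t⁻¹ := by
    calc _ = ∫⁻ t in I, ((2 ^ n)⁻¹ * X) ^ q * ENNReal.ofReal (R (k+1))⁻¹ := by
          rw [lintegral_const, Measure.restrict_apply_univ, hI, Real.volume_Ioo, mul_assoc,
            ← ENNReal.ofReal_mul (by have := R_pos (k+1); positivity)]
          congr 1
          rw [h2, show (2 * R (k+2))⁻¹ * (2 * R (k+2) - R (k+2)) = 2⁻¹ by field_simp; ring,
            ENNReal.ofReal_inv_of_pos (by norm_num), ENNReal.ofReal_ofNat]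
      _ ≤ _ := setLIntegral_mono' measurableSet_Ioo hpt
      _ ≤ _ := lintegral_mono_set hsub
  have hG : (2 ^ n)⁻¹ * X * (2⁻¹) ≤ GG m s q F x := by
    unfold GG
    refine le_trans ?_ (ENNReal.rpow_le_rpow hint (by positivity))
    rw [ENNReal.mul_rpow_of_nonneg _ _ (by positivity), ← ENNReal.rpow_mul, mul_one_div_cancel hq0.ne',
      ENNReal.rpow_one]
    refine mul_le_mul_right ?_ _
    calc (2⁻¹ : ℝ≥0∞) = 2⁻¹ ^ (1:ℝ) := by simp
      _ ≤ _ := ENNReal.rpow_le_rpow_of_exponent_ge (by simp) (by rw [div_le_one hq0]; exact hq)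
  calc X = 2 ^ (n+1) * ((2 ^ n)⁻¹ * X * (2⁻¹)) := by
        rw [pow_succ]
        calc X = (2 ^ n * (2 ^ n)⁻¹) * (2 * 2⁻¹) * X := by
              rw [ENNReal.mul_inv_cancel (by simp) (by simp), ENNReal.mul_inv_cancel (by simp) (by simp)]; simp
          _ = _ := by ring
    _ ≤ _ := mul_le_mul_right hG _

section
variable {N : ℕ} {Ω : Set (Rn (N+1))} {d : ℝ} {K : ℝ≥0} {ν : Measure (Rn (N+1))}

lemma vol_thick (hG : Geo Ω d K ν) (w : Rn (N+1)) (k a : ℕ) :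
    volume (closedBall w (R (k+3)) ∩ cthickening (R (k+3+a)) (frontier Ω)) ≤
      K * K * 6 ^ (N+1) * W d 2 * W (-((N:ℝ)+1-d)) a * W (-((N:ℝ)+1)) (k+3) := by
  have := hG.sf
  set j := k+3+a with hj
  set E := closedBall w (R (k+3)) ∩ cthickening (R j) (frontier Ω)
  have hE : MeasurableSet E := measurableSet_closedBall.inter isClosed_cthickening.measurableSet
  have hR : R j ≤ R (k+3) := R_anti (by omega)
  have h4 : R (k+1) = 4 * R (k+3) := by
    rw [show k + 3 = k+1+1+1 by omega, R_succ (k+1+1), R_succ (k+1)]; ring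
  have hk1 : R (k+1) ≤ 1/2 := by rw [R_succ]; have := R_le_one k; linarith
  set g : Rn (N+1) → ℝ≥0∞ := (closedBall w (R (k+1))).indicator 1
  have hg : Measurable g := measurable_one.indicator measurableSet_closedBall
  have key : W (-d) j * volume E ≤ K * (6 ^ (N+1) * W (-((N:ℝ)+1)) j * (K * W (-d) (k+1))) := by
    calc W (-d) j * volume E = ∫⁻ x in E, W (-d) j := by simp
      _ ≤ ∫⁻ x in E, K * ∫⁻ y in closedBall x (3 * R j), g y ∂ν := by
          refine setLIntegral_mono' hE fun x hx => ?_
          have := low_thick hG (R_pos j) (R_le_one j) hx.2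
          rw [ofReal_R] at this
          refine this.trans (mul_le_mul_right (le_of_eq ?_) _)
          rw [← setLIntegral_one]
          refine setLIntegral_congr_fun measurableSet_closedBall fun y hy => ?_
          have : y ∈ closedBall w (R (k+1)) := by
            have h1 := mem_closedBall.1 hx.1
            have h2 := mem_closedBall.1 hy
            have h3 := dist_triangle y x w
            rw [mem_closedBall]; linarith
          simp [g, this]
      _ ≤ ∫⁻ x, K * ∫⁻ y in closedBall x (3 * R j), g y ∂ν := setLIntegral_le_lintegral _ _
      _ = K * ∫⁻ y, g y * (6 ^ (N+1) * W (-((N:ℝ)+1)) j) ∂ν := by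
          rw [lintegral_const_mul _ (measurable_ball_int ν hg _), tonelli_ball volume ν hg]
          simp_rw [vol3]
      _ = K * (6 ^ (N+1) * W (-((N:ℝ)+1)) j * ν (closedBall w (R (k+1)))) := by
          rw [lintegral_mul_const _ hg, lintegral_indicator_one measurableSet_closedBall]; ring
      _ ≤ _ := by
          refine mul_le_mul_right (mul_le_mul_right ?_ _) _
          have := hG.up w _ (R_pos (k+1)) hk1
          rwa [ofReal_R] at this
  calc volume E = W d j * (W (-d) j * volume E) := by rw [← mul_assoc, W_mul]; simp [W_zero']
    _ ≤ _ := mul_le_mul_right key _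
    _ = K * K * 6 ^ (N+1) * (W d j * W (-((N:ℝ)+1)) j * W (-d) (k+1)) := by ring
    _ = _ := by
        have e : W (-d) (k+1) = W (-d) (k+3) * W d 2 := by
          rw [show k + 3 = k+1+2 by omega, W_add (-d) (k+1) 2, mul_assoc, W_mul]; simp [W_zero']
        rw [W_mul, show d + -((N:ℝ)+1) = -((N:ℝ)+1-d) by ring, hj, W_add, e]
        have e2 : W (-((N:ℝ)+1)) (k+3) = W (-((N:ℝ)+1-d)) (k+3) * W (-d) (k+3) := by
          rw [W_mul]; congr 1; ring
        rw [e2]; ring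

lemma porous (hG : Geo Ω d K ν) : ∃ a : ℕ, ∀ (w : Rn (N+1)) (k : ℕ),
    W (-((N:ℝ)+1)) (k+3) ≤ volume (closedBall w (R (k+3)) \ cthickening (R (k+3+a)) (frontier Ω)) := by
  have hδ : 0 < (N:ℝ) + 1 - d := by have := hG.hd2; linarith
  have ht := ENNReal.tendsto_atTop_zero_of_tsum_ne_top (W_sum hδ)
  have hc : K * K * 6 ^ (N+1) * W d 2 ≠ ⊤ := by
    refine ENNReal.mul_ne_top (ENNReal.mul_ne_top (ENNReal.mul_ne_top ?_ ?_) ?_) (W_ne_top _ _)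
    · simp
    · simp
    · exact ENNReal.pow_ne_top (by simp)
  have ht2 := ENNReal.Tendsto.const_mul ht (Or.inr hc)
  rw [mul_zero] at ht2
  obtain ⟨a, ha⟩ := (ht2.eventually_le_const (show (0:ℝ≥0∞) < 1 by simp)).exists
  refine ⟨a, fun w k => ?_⟩
  have h1 := vol_thick hG w k a
  have h2 : volume (closedBall w (R (k+3))) = 2 ^ (N+1) * W (-((N:ℝ)+1)) (k+3) := by
    rw [vol_cb' w (R_pos _).le, ofReal_R]
  have h3 : volume (closedBall w (R (k+3)) ∩ cthickening (R (k+3+a)) (frontier Ω)) ≤ W (-((N:ℝ)+1)) (k+3) := by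
    refine h1.trans ?_
    calc _ ≤ 1 * W (-((N:ℝ)+1)) (k+3) := mul_le_mul_left ha _
      _ = _ := one_mul _
  have h4 := measure_inter_add_sdiff (μ := volume) (closedBall w (R (k+3)))
    (isClosed_cthickening (δ := R (k+3+a)) (E := frontier Ω)).measurableSet
  rw [h2] at h4
  have h5 : W (-((N:ℝ)+1)) (k+3) + W (-((N:ℝ)+1)) (k+3) ≤ 2 ^ (N+1) * W (-((N:ℝ)+1)) (k+3) := by
    rw [← two_mul]
    refine mul_le_mul_left ?_ _
    exact le_self_pow (by norm_num) (by omega)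
  rw [← h4] at h5
  have h6 := h5.trans (add_le_add h3 le_rfl)
  exact (ENNReal.add_le_add_iff_left (W_ne_top _ _)).1 h6

lemma Nsum (hG : Geo Ω d K ν) (m : ℕ) {p q s τ : ℝ} (hp : 1 < p) (hq : 1 ≤ q) (hs : 0 ≤ s)
    (hτ : s * p = τ + (N + 1 - d)) :
    ∃ C : ℝ≥0, ∀ F : Rn (N+1) → ℝ, Measurable F →
      ∑' k, W τ k * ∫⁻ w, EE m F w (R (k+3)) ^ p ∂ν ≤ C * ∫⁻ x, GG m s q F x ^ p := by
  have := hG.sf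
  have hp0 : 0 < p := by linarith
  obtain ⟨a, ha⟩ := porous hG
  have hWt : W ((N:ℝ)+1-d) 3 ≠ ⊤ := W_ne_top _ _
  lift W ((N:ℝ)+1-d) 3 to ℝ≥0 using hWt with C3 hC3
  refine ⟨(2 ^ (N+1)) ^ p * K * C3 * (2 ^ (N+1+1)) ^ p * a, fun F hF => ?_⟩
  set U : ℕ → Set (Rn (N+1)) := fun k => cthickening (R (k+3)) (frontier Ω) with hUdef
  have hUm : ∀ j, MeasurableSet (U j) := fun j => isClosed_cthickening.measurableSet
  set D : ℕ → Set (Rn (N+1)) := fun k => U k \ U (k+a)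
  have hDm : ∀ j, MeasurableSet (D j) := fun j => (hUm _).diff (hUm _)
  have hem : ∀ k, Measurable fun x => EE m F x (R k) ^ p := fun k => (measurable_EE_x hF _).pow_const _
  have step : ∀ k, W (-((N:ℝ)+1)) (k+3) * ∫⁻ w, EE m F w (R (k+3)) ^ p ∂ν ≤
      (2 ^ (N+1)) ^ p * (K * W (-d) (k+3)) * ∫⁻ x in D k, EE m F x (R (k+2)) ^ p := by
    intro k
    have h2 : R (k+2) = 2 * R (k+3) := by rw [R_succ (k+2)]; ring
    have hk1 : R (k+3) ≤ 1/2 := by rw [R_succ]; have := R_le_one (k+2); linarith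
    set f : Rn (N+1) → ℝ≥0∞ := (D k).indicator (fun x => (2 ^ (N+1)) ^ p * EE m F x (R (k+2)) ^ p)
    have hf : Measurable f := ((hem _).const_mul _).indicator (hDm k)
    calc _ = ∫⁻ w, W (-((N:ℝ)+1)) (k+3) * EE m F w (R (k+3)) ^ p ∂ν := by
          rw [lintegral_const_mul _ (hem _)]
      _ ≤ ∫⁻ w, (∫⁻ x in closedBall w (R (k+3)), f x) ∂ν := by
          refine lintegral_mono_ae (hG.supp.mono fun w hw => ?_)
          calc _ ≤ volume (closedBall w (R (k+3)) \ cthickening (R (k+3+a)) (frontier Ω)) *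
                EE m F w (R (k+3)) ^ p := mul_le_mul_left (ha w k) _
            _ = ∫⁻ x in closedBall w (R (k+3)) \ cthickening (R (k+3+a)) (frontier Ω),
                EE m F w (R (k+3)) ^ p := by
                rw [lintegral_const, Measure.restrict_apply_univ, mul_comm]
            _ ≤ ∫⁻ x in closedBall w (R (k+3)) \ cthickening (R (k+3+a)) (frontier Ω), f x := by
                refine setLIntegral_mono' (measurableSet_closedBall.diff
                  isClosed_cthickening.measurableSet) fun x hx => ?_
                have hxD : x ∈ D k := by
                  refine ⟨mem_cthickening_of_dist_le x w _ _ hw (mem_closedBall.1 hx.1), ?_⟩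
                  have := hx.2
                  rwa [show k + 3 + a = k + a + 3 by omega] at this
                simp only [f, indicator_of_mem hxD]
                rw [← ENNReal.mul_rpow_of_nonneg _ _ hp0.le]
                refine ENNReal.rpow_le_rpow ?_ hp0.le
                have := EE_mono (m := m) (F := F) (x := w) (y := x) (t := R (k+3)) (r := R (k+2)) (c := 2)
                  (R_pos _) (R_pos _) (by norm_num)
                  (by have := mem_closedBall'.1 hx.1; linarith) h2.le
                rwa [ENNReal.ofReal_pow (by norm_num), ENNReal.ofReal_ofNat] at this
            _ ≤ _ := lintegral_mono_set sdiff_subset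
      _ = ∫⁻ x, f x * ν (closedBall x (R (k+3))) := tonelli_ball ν volume hf _
      _ ≤ ∫⁻ x, f x * (K * W (-d) (k+3)) := by
          refine lintegral_mono fun x => mul_le_mul_right ?_ _
          have := hG.up x _ (R_pos (k+3)) hk1
          rwa [ofReal_R] at this
      _ = _ := by
          rw [lintegral_mul_const _ hf, lintegral_indicator (hDm k), lintegral_const_mul _ (hem _)]
          ring
  have step2 : ∀ k, W τ k * ∫⁻ w, EE m F w (R (k+3)) ^ p ∂ν ≤
      (2 ^ (N+1)) ^ p * K * C3 * (2 ^ (N+1+1)) ^ p * ∫⁻ x in D k, GG m s q F x ^ p := by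
    intro k
    calc _ = W τ k * W ((N:ℝ)+1) (k+3) * (W (-((N:ℝ)+1)) (k+3) * ∫⁻ w, EE m F w (R (k+3)) ^ p ∂ν) := by
          rw [mul_assoc (W τ k), ← mul_assoc (W ((N:ℝ)+1) (k+3)), W_mul ((N:ℝ)+1)]; simp [W_zero']
      _ ≤ _ := mul_le_mul_right (step k) _
      _ = (2 ^ (N+1)) ^ p * K * C3 * ∫⁻ x in D k, W (s*p) k * EE m F x (R (k+2)) ^ p := by
          rw [lintegral_const_mul _ (hem _)]
          have e1 : W ((N:ℝ)+1) (k+3) * W (-d) (k+3) = W ((N:ℝ)+1-d) k * C3 := by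
            rw [W_mul, hC3, ← W_add]; rfl
          calc _ = (2 ^ (N+1)) ^ p * K * (W τ k * (W ((N:ℝ)+1) (k+3) * W (-d) (k+3))) *
                ∫⁻ x in D k, EE m F x (R (k+2)) ^ p := by ring
            _ = _ := by rw [e1, ← mul_assoc (W τ k), W_mul, ← hτ]; ring
      _ ≤ (2 ^ (N+1)) ^ p * K * C3 * ∫⁻ x in D k, (2 ^ (N+1+1)) ^ p * GG m s q F x ^ p := by
          refine mul_le_mul_right (lintegral_mono fun x => ?_) _
          rw [← W_rpow, ← ENNReal.mul_rpow_of_nonneg _ _ hp0.le, ← ENNReal.mul_rpow_of_nonneg _ _ hp0.le]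
          exact ENNReal.rpow_le_rpow (EE_GG hs hq x k) hp0.le
      _ = _ := by
          rw [lintegral_const_mul _ ((measurable_GG hF).pow_const _)]; ring
  have hsum : ∑' k, ∫⁻ x in D k, GG m s q F x ^ p ≤ a * ∫⁻ x, GG m s q F x ^ p := by
    have hgm := (measurable_GG (m := m) (s := s) (q := q) hF).pow_const p
    calc _ = ∫⁻ x, ∑' k, (D k).indicator (fun x => GG m s q F x ^ p) x := by
          rw [lintegral_tsum fun k => (hgm.indicator (hDm k)).aemeasurable]
          congr 1; funext k; rw [lintegral_indicator (hDm k)]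
      _ ≤ ∫⁻ x, a * GG m s q F x ^ p := by
          refine lintegral_mono fun x => ?_
          refine le_trans (le_of_eq ?_) (overlap a (fun k => x ∈ U k) (fun i j hij hx =>
            cthickening_mono (R_anti (by omega)) _ hx) (GG m s q F x ^ p))
          rfl
      _ = _ := lintegral_const_mul _ hgm
  calc _ ≤ _ := ENNReal.tsum_le_tsum step2
    _ = _ := ENNReal.tsum_mul_left
    _ ≤ _ := mul_le_mul_right hsum _
    _ = _ := by
        push_cast
        rw [ENNReal.coe_rpow_of_nonneg _ hp0.le, ENNReal.coe_rpow_of_nonneg _ hp0.le]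
        push_cast
        ring
end

lemma tsum_rpow_le {q : ℝ} (hq : 1 ≤ q) (B : ℕ → ℝ≥0∞) : (∑' i, B i ^ q) ^ (1/q) ≤ ∑' i, B i := by
  have hq0 : 0 < q := by linarith
  rw [one_div, ENNReal.rpow_inv_le_iff hq0]
  have e : ∀ x : ℝ≥0∞, x ^ q = x * x ^ (q-1) := fun x => by
    conv_lhs => rw [show q = 1 + (q-1) by ring, ENNReal.rpow_add_of_nonneg _ _ (by norm_num) (by linarith),
      ENNReal.rpow_one]
  rw [e (∑' i, B i), ← ENNReal.tsum_mul_right]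
  refine ENNReal.tsum_le_tsum fun i => ?_
  rw [e]
  exact mul_le_mul_right (ENNReal.rpow_le_rpow (ENNReal.le_tsum i) (by linarith)) _

lemma GG_phi {n : ℕ} {Ω : Set (Rn n)} (ho : IsOpen Ω) {m : ℕ} {s q : ℝ} (hs : 0 ≤ s) (hq : 1 ≤ q)
    {φ F : Rn n → ℝ} (hA : Adm Ω φ F) (x : Rn n) :
    GG m s q φ x ≤ GG m s q F x + ∑' i, {i | x ∈ cthickening (R i) (frontier Ω)}.indicator
      (fun i => W s (i+1) * (2 ^ n * av φ x (R i))) i := by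
  obtain ⟨hφ, hF, hφ0, -, hae⟩ := hA
  have hq0 : 0 < q := by linarith
  set B : ℕ → ℝ≥0∞ := {i | x ∈ cthickening (R i) (frontier Ω)}.indicator
      (fun i => W s (i+1) * (2 ^ n * av φ x (R i))) with hB
  set b : ℝ → ℝ≥0∞ := fun t => ∑' i, (Ioc (R (i+1)) (R i)).indicator
    (fun _ => B i ^ q * ENNReal.ofReal (R (i+1))⁻¹) t with hb
  have hbi : ∀ i, Measurable fun t => (Ioc (R (i+1)) (R i)).indicator
    (fun _ => B i ^ q * ENNReal.ofReal (R (i+1))⁻¹) t := fun i => measurable_const.indicator measurableSet_Ioc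
  have hbm : Measurable b := Measurable.tsum hbi
  have hpt : ∀ t ∈ Ioo (0:ℝ) 1, (ENNReal.ofReal (t ^ (-s)) * EE m φ x t) ^ q * ENNReal.ofReal t⁻¹ ≤
      (ENNReal.ofReal (t ^ (-s)) * EE m F x t) ^ q * ENNReal.ofReal t⁻¹ + b t := by
    intro t ht
    by_cases hne : (closedBall x t ∩ frontier Ω).Nonempty
    · obtain ⟨y, hy, hyf⟩ := hne
      obtain ⟨i, hi1, hi2⟩ := exists_nat_pow_near_of_lt_one ht.1 ht.2.le (show (0:ℝ) < 1/2 by norm_num)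
        (by norm_num)
      change R (i+1) < t at hi1
      change t ≤ R i at hi2
      refine le_trans ?_ (le_add_left (ENNReal.le_tsum i))
      rw [indicator_of_mem (show t ∈ Ioc (R (i+1)) (R i) from ⟨hi1, hi2⟩)]
      have hxU : i ∈ {i | x ∈ cthickening (R i) (frontier Ω)} :=
        mem_cthickening_of_dist_le x y _ _ hyf ((mem_closedBall'.1 hy).trans hi2)
      rw [hB, indicator_of_mem hxU]
      have h2 : R i ≤ 2 * t := by have := R_succ i; linarith
      refine mul_le_mul' (ENNReal.rpow_le_rpow (mul_le_mul' ?_ ?_) hq0.le) (ENNReal.ofReal_le_ofReal ?_)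
      · have := ofReal_R (-s) (i+1)
        rw [neg_neg] at this
        rw [← this]
        exact ENNReal.ofReal_le_ofReal (Real.rpow_le_rpow_of_nonpos (R_pos _) hi1.le (by linarith))
      · refine EE_le_av.trans ?_
        have := av_mono (F := φ) (x := x) (y := x) (t := t) (r := R i) (c := 2) ht.1 (R_pos _) (by norm_num)
          (by simpa using hi2) h2
        rwa [ENNReal.ofReal_pow (by norm_num), ENNReal.ofReal_ofNat] at this
      · exact inv_anti₀ (R_pos _) hi1.le
    · refine le_add_right ?_
      refine mul_le_mul_left (ENNReal.rpow_le_rpow (mul_le_mul_right ?_ _) hq0.le) _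
      have hsub : closedBall x t ⊆ Ω ∪ (closure Ω)ᶜ := by
        intro y hy
        by_contra hc
        simp only [mem_union, mem_compl_iff, not_or, not_not] at hc
        refine hne ⟨y, hy, ?_⟩
        rw [ho.frontier_eq]
        exact ⟨hc.2, hc.1⟩
      rcases (convex_closedBall x t).isPreconnected.subset_or_subset ho isClosed_closure.isOpen_compl
        (disjoint_compl_right.mono_left subset_closure) hsub with h | h
      · refine le_of_eq (EE_congr ?_)
        exact (ae_restrict_of_ae_restrict_of_subset h hae).mono fun y hy => hy.symm
      · refine EE_le_av.trans ?_
        have : av φ x t = av (fun _ => 0) x t := by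
          refine av_congr ?_
          filter_upwards [ae_restrict_mem measurableSet_closedBall] with y hy
          exact hφ0 y fun hc => h hy (subset_closure hc)
        rw [this]; simp [av]
  have hbint : ∫⁻ t in Ioo (0:ℝ) 1, b t ≤ ∑' i, B i ^ q := by
    refine (setLIntegral_le_lintegral _ _).trans ?_
    rw [hb, lintegral_tsum fun i => (hbi i).aemeasurable]
    refine ENNReal.tsum_le_tsum fun i => le_of_eq ?_
    rw [lintegral_indicator measurableSet_Ioc, lintegral_const, Measure.restrict_apply_univ, Real.volume_Ioc,
      mul_assoc, ← ENNReal.ofReal_mul (by have := R_pos (i+1); positivity)]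
    have hne := (R_pos (i+1)).ne'
    rw [show R i - R (i+1) = R (i+1) by rw [R_succ]; ring, inv_mul_cancel₀ hne]
    simp
  unfold GG
  calc _ ≤ (∫⁻ t in Ioo (0:ℝ) 1, (ENNReal.ofReal (t ^ (-s)) * EE m F x t) ^ q * ENNReal.ofReal t⁻¹ + b t) ^ (1/q) :=
        ENNReal.rpow_le_rpow (setLIntegral_mono' measurableSet_Ioo hpt) (by positivity)
    _ ≤ _ := by
        rw [lintegral_add_right _ hbm]
        refine (ENNReal.rpow_add_le_add_rpow _ _ (by positivity) (by rw [div_le_one hq0]; exact hq)).trans ?_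
        refine add_le_add le_rfl ?_
        exact (ENNReal.rpow_le_rpow hbint (by positivity)).trans (tsum_rpow_le hq B)

section
variable {N : ℕ} {Ω : Set (Rn (N+1))} {d : ℝ} {K : ℝ≥0} {ν : Measure (Rn (N+1))}

lemma GG_phi2 (ho : IsOpen Ω) {m : ℕ} {s q : ℝ} (hs : 0 ≤ s) (hq : 1 ≤ q) :
    ∃ C : ℝ≥0, ∀ φ F : Rn (N+1) → ℝ, Adm Ω φ F → ∀ x,
    GG m s q φ x ≤ C * (GG m s q F x + (av φ x (R 0) + ∑' i, {i | x ∈ cthickening (R (i+6)) (frontier Ω)}.indicator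
      (fun i => W s i * av φ x (R (i+6))) i)) := by
  have hc : W s 7 * 2 ^ (N+1) * 6 * 64 ^ (N+1) + 1 ≠ ⊤ := by
    refine ENNReal.add_ne_top.2 ⟨ENNReal.mul_ne_top (ENNReal.mul_ne_top (ENNReal.mul_ne_top (W_ne_top _ _) ?_) ?_) ?_, by simp⟩
    · exact ENNReal.pow_ne_top (by simp)
    · simp
    · exact ENNReal.pow_ne_top (by simp)
  set c : ℝ≥0∞ := W s 7 * 2 ^ (N+1) * 6 * 64 ^ (N+1) + 1 with hcd
  lift c to ℝ≥0 using hc with C hC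
  refine ⟨C, fun φ F hA x => (GG_phi ho hs hq hA x).trans ?_⟩
  rw [mul_add]
  have h1 : (1:ℝ≥0∞) ≤ C := by rw [hcd]; exact le_add_self
  have h64 : (1:ℝ≥0∞) ≤ 6 * 64 ^ (N+1) := by
    calc (1:ℝ≥0∞) = 1 * 1 ^ (N+1) := by simp
      _ ≤ _ := by gcongr <;> norm_num
  have h2 : W s 7 * 2 ^ (N+1) ≤ C := by
    rw [hcd, mul_assoc _ 6]
    exact le_add_right (le_mul_of_one_le_right' h64)
  refine add_le_add (le_mul_of_one_le_left' h1) ?_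
  rw [← Summable.sum_add_tsum_nat_add' (k := 6) ENNReal.summable, mul_add]
  refine add_le_add ?_ ?_
  · calc _ ≤ ∑ i ∈ Finset.range 6, W s 7 * (2 ^ (N+1) * (64 ^ (N+1) * av φ x (R 0))) := by
          refine Finset.sum_le_sum fun i hi => (indicator_le_self' (fun _ _ => zero_le) i).trans ?_
          have hi6 := Finset.mem_range.1 hi
          refine mul_le_mul' (W_mono hs (by omega)) (mul_le_mul_right ?_ _)
          have h6 : R 6 = 1/64 := by norm_num [R]
          have h0 : R 0 = 1 := by norm_num [R]
          have hR6 : R 6 ≤ R i := R_anti (by omega)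
          have := av_mono (F := φ) (x := x) (y := x) (t := R i) (r := R 0) (c := 64) (R_pos _) (R_pos _) (by norm_num)
            (by simpa using R_anti (Nat.zero_le i)) (by rw [h0]; linarith)
          rwa [ENNReal.ofReal_pow (by norm_num), ENNReal.ofReal_ofNat] at this
      _ = W s 7 * 2 ^ (N+1) * 6 * 64 ^ (N+1) * av φ x (R 0) := by
          rw [Finset.sum_const, Finset.card_range, nsmul_eq_mul]; push_cast; ring
      _ ≤ _ := mul_le_mul_left (by rw [hcd]; exact le_self_add) _
  · rw [← ENNReal.tsum_mul_left]
    refine ENNReal.tsum_le_tsum fun i => ?_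
    by_cases hx : x ∈ cthickening (R (i+6)) (frontier Ω)
    · rw [indicator_of_mem (by exact hx), indicator_of_mem (by exact hx)]
      calc _ = W s 7 * 2 ^ (N+1) * (W s i * av φ x (R (i+6))) := by
            rw [show i+6+1 = i+7 by omega, W_add]; ring
        _ ≤ _ := mul_le_mul_left h2 _
    · rw [indicator_of_notMem (by exact hx)]; exact zero_le

lemma av_one {p : ℝ} (hp : 1 < p) {φ : Rn (N+1) → ℝ} (hφ : Measurable φ) :
    ∫⁻ x, av φ x (R 0) ^ p ≤ ∫⁻ x, ‖φ x‖ₑ ^ p := by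
  have hR := R_pos 0
  have hm : Measurable fun x => ‖φ x‖ₑ ^ p := hφ.enorm.pow_const _
  set V := volume (closedBall (0 : Rn (N+1)) (R 0))
  have hV : ∀ x : Rn (N+1), volume (closedBall x (R 0)) = V := fun x => by
    rw [vol_cb' x hR.le]; exact (vol_cb' 0 hR.le).symm
  have hV0 : V ≠ 0 := (measure_closedBall_pos _ _ hR).ne'
  have hVt : V ≠ ⊤ := measure_closedBall_lt_top.ne
  calc _ ≤ ∫⁻ x, V⁻¹ * ∫⁻ y in closedBall x (R 0), ‖φ y‖ₑ ^ p := by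
        refine lintegral_mono fun x => ?_
        have := av_rpow_le hp hφ x hR
        rwa [hV] at this
    _ = V⁻¹ * ∫⁻ y, ‖φ y‖ₑ ^ p * V := by
        rw [lintegral_const_mul _ (measurable_ball_int volume hm _), tonelli_ball volume volume hm]
        simp_rw [hV]
    _ = _ := by
        rw [lintegral_mul_const _ hm, mul_comm, mul_assoc, ENNReal.mul_inv_cancel hV0 hVt, mul_one]

lemma apriori (hG : Geo Ω d K ν) {p q s : ℝ} (hp : 1 < p) (hq : 1 ≤ q) (hs : ((N:ℝ) + 1 - d) / p < s) :
    Apriori Ω s p q := by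
  have hp0 : 0 < p := by linarith
  have hδ : 0 < (N:ℝ) + 1 - d := by have := hG.hd2; linarith
  have hs0 : 0 ≤ s := (div_pos hδ hp0).le.trans hs.le
  set τ := s * p - (N + 1 - d) with hτd
  have hτ : s * p = τ + (N + 1 - d) := by rw [hτd]; ring
  have hτ0 : 0 < τ := by rw [div_lt_iff₀ hp0] at hs; linarith
  set m := ⌊s⌋₊
  obtain ⟨C1, h1⟩ := GG_phi2 (m := m) (s := s) (q := q) hG.op hs0 hq
  obtain ⟨C2, h2⟩ := near_sum hG hp hτ
  obtain ⟨C3, h3⟩ := Asum hG m hp hτ0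
  obtain ⟨C4, h4⟩ := Nsum hG m hp hq hs0 hτ
  set E : ℝ≥0 := C1 ^ p * (2 ^ (p-1) * (1 + 2 ^ (p-1) * (1 + C2 * C3 * C4))) with hE
  refine ⟨1 + E ^ (1/p), fun φ F hφ hF ha hb hc => ?_⟩
  have hA : Adm Ω φ F := ⟨hφ, hF, ha, hb, hc⟩
  have hLp : ∫⁻ x, ‖φ x‖ₑ ^ p ≤ ∫⁻ x, ‖F x‖ₑ ^ p :=
    lintegral_mono_ae ((adm_le hG.op hA).mono fun x hx => ENNReal.rpow_le_rpow hx hp0.le)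
  set X := ∫⁻ x, ‖F x‖ₑ ^ p
  set Y := ∫⁻ x, GG m s q F x ^ p
  set T : Rn (N+1) → ℝ≥0∞ := fun x => ∑' i, {i | x ∈ cthickening (R (i+6)) (frontier Ω)}.indicator
      (fun i => W s i * av φ x (R (i+6))) i
  have hT : ∫⁻ x, T x ^ p ≤ C2 * C3 * C4 * Y := by
    calc _ ≤ _ := h2 φ hφ
      _ ≤ _ := mul_le_mul_right ((h3 φ F hA).trans (mul_le_mul_right (h4 F hF) _)) _
      _ = _ := by ring
  have hGG : ∫⁻ x, GG m s q φ x ^ p ≤ E * (X + Y) := by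
    have hgm := (measurable_GG (m := m) (s := s) (q := q) hF).pow_const p
    have ham := (measurable_av_x hφ (R 0)).pow_const p
    calc _ ≤ ∫⁻ x, (C1:ℝ≥0∞) ^ p * (2 ^ (p-1) * (GG m s q F x ^ p + 2 ^ (p-1) * (av φ x (R 0) ^ p + T x ^ p))) := by
          refine lintegral_mono fun x => ?_
          refine (ENNReal.rpow_le_rpow (h1 φ F hA x) hp0.le).trans ?_
          rw [ENNReal.mul_rpow_of_nonneg _ _ hp0.le]
          refine mul_le_mul_right ?_ _
          refine (ENNReal.rpow_add_le_mul_rpow_add_rpow _ _ hp.le).trans ?_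
          refine mul_le_mul_right (add_le_add le_rfl ?_) _
          exact ENNReal.rpow_add_le_mul_rpow_add_rpow _ _ hp.le
      _ = (C1:ℝ≥0∞) ^ p * (2 ^ (p-1) * (Y + 2 ^ (p-1) * ((∫⁻ x, av φ x (R 0) ^ p) + ∫⁻ x, T x ^ p))) := by
          have t2 : (2:ℝ≥0∞) ^ (p-1) ≠ ⊤ := ENNReal.rpow_ne_top_of_nonneg (by linarith) (by simp)
          have t1 : (C1:ℝ≥0∞) ^ p ≠ ⊤ := ENNReal.rpow_ne_top_of_nonneg hp0.le (by simp)
          rw [lintegral_const_mul' _ _ t1, lintegral_const_mul' _ _ t2, lintegral_add_left hgm,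
            lintegral_const_mul' _ _ t2, lintegral_add_left ham]
      _ ≤ (C1:ℝ≥0∞) ^ p * (2 ^ (p-1) * ((X + Y) + 2 ^ (p-1) * ((X + Y) + C2 * C3 * C4 * (X + Y)))) := by
          refine mul_le_mul_right (mul_le_mul_right (add_le_add le_add_self (mul_le_mul_right (add_le_add ?_ ?_) _)) _) _
          · exact ((av_one hp hφ).trans hLp).trans le_self_add
          · exact hT.trans (mul_le_mul_right le_add_self _)
      _ = (C1:ℝ≥0∞) ^ p * (2 ^ (p-1) * (1 + 2 ^ (p-1) * (1 + C2 * C3 * C4))) * (X + Y) := by ring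
      _ = _ := by
          rw [hE]
          push_cast
          rw [ENNReal.coe_rpow_of_nonneg _ hp0.le, ENNReal.coe_rpow_of_nonneg _ (by linarith)]
          push_cast
          rfl
  rw [tlNorm_eq, tlNorm_eq]
  calc _ ≤ X ^ (1/p) + (E * (X + Y)) ^ (1/p) :=
        add_le_add (ENNReal.rpow_le_rpow hLp (by positivity)) (ENNReal.rpow_le_rpow hGG (by positivity))
    _ ≤ 1 * (X ^ (1/p) + Y ^ (1/p)) + (E:ℝ≥0∞) ^ (1/p) * (X ^ (1/p) + Y ^ (1/p)) := by
        rw [one_mul, ENNReal.mul_rpow_of_nonneg _ _ (by positivity)]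
        refine add_le_add le_self_add (mul_le_mul_right ?_ _)
        exact ENNReal.rpow_add_le_add_rpow _ _ (by positivity) (by rw [div_le_one hp0]; exact hp.le)
    _ = _ := by
        rw [← add_mul]
        push_cast
        rw [ENNReal.coe_rpow_of_nonneg _ (by positivity)]
end

lemma geo_of {N : ℕ} {Ω : Set (Rn (N+1))} (ho : IsOpen Ω) {d Cn Cd : ℝ}
    (hcl : IsDSet (closure Ω) ((N+1 : ℕ) : ℝ) Cn) (hbd : IsDSet (frontier Ω) d Cd)
    (hd1 : N < d) (hd2 : d < N + 1) :
    Geo Ω d (Real.toNNReal (Cd * 2 ^ d + Cn)) (μH[d].restrict (frontier Ω)) := by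
  obtain ⟨-, hCn, hcl⟩ := hcl
  obtain ⟨-, hCd, hbd⟩ := hbd
  have hd0 : 0 < d := lt_of_le_of_lt (Nat.cast_nonneg N) hd1
  have h2d : 1 ≤ (2:ℝ) ^ d := Real.one_le_rpow (by norm_num) hd0.le
  have hK1 : Cd * 2 ^ d ≤ Cd * 2 ^ d + Cn := by linarith
  have hK2 : Cd ≤ Cd * 2 ^ d + Cn := by nlinarith
  have hK3 : Cn ≤ Cd * 2 ^ d + Cn := by nlinarith
  have hKc : ((Real.toNNReal (Cd * 2 ^ d + Cn) : ℝ≥0) : ℝ≥0∞) = ENNReal.ofReal (Cd * 2 ^ d + Cn) := rfl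
  have hfm : MeasurableSet (frontier Ω) := isClosed_frontier.measurableSet
  have hap : ∀ (x : Rn (N+1)) r, (μH[d].restrict (frontier Ω)) (closedBall x r) =
      μH[d] (closedBall x r ∩ frontier Ω) := fun x r => Measure.restrict_apply measurableSet_closedBall
  have hup : ∀ (x : Rn (N+1)) r, 0 < r → r ≤ 1/2 → (μH[d].restrict (frontier Ω)) (closedBall x r) ≤
      ENNReal.ofReal (Cd * 2 ^ d + Cn) * ENNReal.ofReal (r ^ d) := by
    intro x r h0 h1
    rw [hap]
    rcases (closedBall x r ∩ frontier Ω).eq_empty_or_nonempty with h | ⟨w, hw, hwf⟩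
    · rw [h]; simp
    · have hsub : closedBall x r ∩ frontier Ω ⊆ closedBall w (2*r) ∩ frontier Ω :=
        inter_subset_inter_left _ (closedBall_subset_closedBall' (by
          have := mem_closedBall'.1 hw; linarith))
      refine (measure_mono hsub).trans (((hbd w hwf (2*r) (by linarith) (by linarith)).2).trans ?_)
      rw [← ENNReal.ofReal_mul (by nlinarith)]
      refine ENNReal.ofReal_le_ofReal ?_
      rw [Real.mul_rpow (by norm_num) h0.le, ← mul_assoc]
      exact mul_le_mul_of_nonneg_right hK1 (by positivity)
  have hvol : (μH[((N+1:ℕ):ℝ)] : Measure (Rn (N+1))) = volume := by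
    have := hausdorffMeasure_pi_real (ι := Fin (N+1))
    rwa [Fintype.card_fin] at this
  have hnull : volume (frontier Ω) = 0 := by
    refine measure_null_of_locally_null _ fun x _ => ⟨closedBall x (1/2) ∩ frontier Ω, ?_, ?_⟩
    · exact inter_mem (mem_nhdsWithin_of_mem_nhds (closedBall_mem_nhds x (by norm_num))) self_mem_nhdsWithin
    · rw [← hvol]
      refine (Measure.hausdorffMeasure_zero_or_top (d₁ := d) (by push_cast; exact hd2) _).resolve_right ?_
      have := hup x (1/2) (by norm_num) le_rfl
      rw [hap] at this
      exact (this.trans_lt (ENNReal.mul_lt_top (by simp) (by simp))).ne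
  refine ⟨ho, hd1, hd2, fun x r h0 h1 => hup x r h0 h1, ?_, ?_, ae_restrict_mem hfm, ?_⟩
  · intro w hw r h0 h1
    rw [hap, hKc]
    have := (hbd w hw r h0 h1).1
    rw [ENNReal.ofReal_mul (by positivity), ENNReal.ofReal_inv_of_pos (by linarith),
      ENNReal.inv_mul_le_iff (by simp; linarith) (by simp)] at this
    exact this.trans (mul_le_mul_left (ENNReal.ofReal_le_ofReal hK2) _)
  · intro w hw r h0 h1
    rw [hKc]
    have := (hcl w (frontier_subset_closure hw) r h0 h1).1
    rw [ENNReal.ofReal_mul (by positivity), ENNReal.ofReal_inv_of_pos (by linarith),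
      ENNReal.inv_mul_le_iff (by simp; linarith) (by simp), hvol] at this
    push_cast at this
    refine this.trans (mul_le_mul' (ENNReal.ofReal_le_ofReal hK3) ?_)
    calc volume (closedBall w r ∩ closure Ω) ≤ volume ((closedBall w r ∩ Ω) ∪ frontier Ω) := by
          refine measure_mono ?_
          rw [closure_eq_self_union_frontier, inter_union_distrib_left]
          exact union_subset_union_right _ inter_subset_right
      _ ≤ _ := measure_union_le _ _
      _ = _ := by rw [hnull, add_zero]
  · have : IsLocallyFiniteMeasure (μH[d].restrict (frontier Ω)) := ⟨fun x =>
      ⟨closedBall x (1/2), closedBall_mem_nhds x (by norm_num),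
        (hup x (1/2) (by norm_num) le_rfl).trans_lt (ENNReal.mul_lt_top (by simp) (by simp))⟩⟩
    infer_instance

/-- **`∘F^s_{pq}(Ω) ⊆ F̃^s_{pq}(Ω)`** (Theorem 4.5). Let `Ω ⊆ ℝⁿ` (`n ≥ 2`) be a domain
whose closure is an `n`-set and whose boundary is a `d`-set with `n−1 < d < n`, and let
`1 < p < ∞`, `1 ≤ q < ∞`, `s > (n−d)/p`. Then there is `C > 0` such that: every
`f ∈ L^p(Ω)` that can be approximated in `F^s_{pq}(Ω)` by functions in `C_c^∞(Ω)`
admits an extension `g ∈ F^s_{pq}(ℝⁿ)` with `g = f` a.e. on `Ω`, `g = 0` a.e. outside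
`closure Ω`, and `‖g‖_{F^s_{pq}(ℝⁿ)} ≤ C ‖f‖_{F^s_{pq}(Ω)}`. -/
theorem closure_subset_tilde {n : ℕ} (hn : 2 ≤ n) (Ω : Set (Rn n))
    (hΩo : IsOpen Ω) (hΩc : IsConnected Ω) (d Cn Cd : ℝ)
    (hcl : IsDSet (closure Ω) (n : ℝ) Cn) (hbd : IsDSet (frontier Ω) d Cd)
    (hd1 : (n : ℝ) - 1 < d) (hd2 : d < n)
    (p q s : ℝ) (hp : 1 < p) (hq : 1 ≤ q) (hs : ((n : ℝ) - d) / p < s) :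
    ∃ C > 0, ∀ f : Rn n → ℝ, Measurable f →
      (∫⁻ x in Ω, ENNReal.ofReal |f x| ^ p) < ⊤ →
      (∃ φ : ℕ → Rn n → ℝ,
        (∀ j, ContDiff ℝ (⊤ : ℕ∞) (φ j) ∧ HasCompactSupport (φ j) ∧ tsupport (φ j) ⊆ Ω) ∧
        Tendsto (fun j => tlNormOn Ω s p q (fun x => f x - φ j x)) atTop (𝓝 0)) →
      ∃ g : Rn n → ℝ, Measurable g ∧ (∀ᵐ x ∂volume.restrict Ω, g x = f x) ∧
        (∀ᵐ x ∂volume, x ∉ closure Ω → g x = 0) ∧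
        tlNorm s p q g ≤ ENNReal.ofReal C * tlNormOn Ω s p q f := by
  obtain ⟨N, rfl⟩ : ∃ N, n = N + 1 := ⟨n - 1, by omega⟩
  push_cast at hd1 hd2 hs
  exact reduction Ω hΩo p q s hp hq
    (apriori (geo_of hΩo hcl hbd (by linarith) hd2) hp hq hs)
end
end

section
/- Every d-set S ⊆ ℝⁿ with 0 < d < n is porous: there exists κ ≥ 1 (depending on n, d and the regularity constant of S) such that for every x ∈ ℝⁿ and every 0 < r ≤ 1 there is a point y ∈ Q(x,r) with Q(y, r/κ) ∩ S = ∅. -/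
open MeasureTheory Metric Set Filter
open scoped ENNReal NNReal Topology

noncomputable section

/-- **`d`-sets with `d < n` are porous** (Remark 2.8). If `S ⊆ ℝⁿ` is a `d`-set with
`0 < d < n`, then there is `κ ≥ 1` such that for every `x ∈ ℝⁿ` and `0 < r ≤ 1` there is
`y ∈ Q(x,r)` with `Q(y, r/κ) ∩ S = ∅`. -/
theorem dset_porous {n : ℕ} (S : Set (Rn n)) (d C₀ : ℝ)
    (hd0 : 0 < d) (hdn : d < n) (hS : IsDSet S d C₀) :
    ∃ κ : ℝ, 1 ≤ κ ∧ ∀ (x : Rn n) (r : ℝ), 0 < r → r ≤ 1 →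
      ∃ y ∈ closedBall x r, closedBall y (r / κ) ∩ S = ∅ := by
  obtain ⟨hcl, hC1, hreg⟩ := hS
  have hC0 : 0 < C₀ := by linarith
  obtain ⟨N, hN1, hN⟩ : ∃ N : ℕ, 1 ≤ N ∧ C₀ ^ 2 * 10 ^ d < (N : ℝ) ^ ((n : ℝ) - d) := by
    have h := (tendsto_rpow_atTop (sub_pos.2 hdn)).comp (tendsto_natCast_atTop_atTop (R := ℝ))
    have h2 := (h.eventually_gt_atTop (C₀ ^ 2 * 10 ^ d)).and (eventually_ge_atTop 1)
    obtain ⟨N, h3, h4⟩ := h2.exists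
    exact ⟨N, h4, h3⟩
  have hNr : (1 : ℝ) ≤ N := by exact_mod_cast hN1
  have hN0 : (0 : ℝ) < N := by linarith
  refine ⟨8 * N, by linarith, ?_⟩
  intro x r hr hr1
  by_contra hcon
  push Not at hcon
  set t : ℝ := r / N with ht
  have ht0 : 0 < t := by positivity
  have htN : t * N = r := by rw [ht]; field_simp
  have htr : t ≤ r := by nlinarith
  have h8 : r / (8 * N) = t / 8 := by rw [ht]; field_simp
  let y : (Fin n → Fin N) → Rn n := fun k i => x i + t / 2 * ((k i : ℕ) : ℝ)
  have hk : ∀ (k : Fin n → Fin N) i, t * ((k i : ℕ) : ℝ) ≤ r := by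
    intro k i
    have : ((k i : ℕ) : ℝ) ≤ N := by exact_mod_cast (k i).2.le
    nlinarith
  have hk0 : ∀ (k : Fin n → Fin N) i, 0 ≤ t * ((k i : ℕ) : ℝ) := by
    intro k i; positivity
  have hy : ∀ k, y k ∈ closedBall x r := by
    intro k
    rw [mem_closedBall, dist_pi_le_iff hr.le]
    intro i
    rw [Real.dist_eq, abs_le]
    have := hk k i
    have := hk0 k i
    constructor <;> simp only [y] <;> linarith
  have hw : ∀ k, ∃ w, w ∈ S ∧ ∀ i, |w i - y k i| ≤ t / 8 := by
    intro k
    obtain ⟨w, hw1, hw2⟩ := hcon (y k) (hy k)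
    refine ⟨w, hw2, ?_⟩
    rw [mem_closedBall, h8, dist_pi_le_iff (by positivity)] at hw1
    exact hw1
  choose w hwS hwy using hw
  let k0 : Fin n → Fin N := fun _ => ⟨0, hN1⟩
  have hsub : (⋃ k, closedBall (w k) (t / 10) ∩ S) ⊆ closedBall (w k0) r ∩ S := by
    refine iUnion_subset fun k z hz => ⟨?_, hz.2⟩
    have hz1 := hz.1
    rw [mem_closedBall, dist_pi_le_iff (by positivity)] at hz1
    rw [mem_closedBall, dist_pi_le_iff hr.le]
    intro i
    have a := hz1 i
    have b := hwy k i
    have c := hwy k0 i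
    have := hk k i
    have := hk0 k i
    have e : y k0 i = x i := by simp [y, k0]
    rw [e] at c
    rw [Real.dist_eq, abs_le] at a ⊢
    rw [abs_le] at b c
    simp only [y] at b
    constructor <;> linarith
  have hdisj : Pairwise (Function.onFun Disjoint fun k => closedBall (w k) (t / 10) ∩ S) := by
    intro j k hjk
    rw [Function.onFun, Set.disjoint_left]
    rintro z ⟨hz, -⟩ ⟨hz', -⟩
    apply hjk
    funext i
    rw [mem_closedBall, dist_pi_le_iff (by positivity)] at hz hz'
    have a := hz i
    have a' := hz' i
    have b := hwy j i
    have b' := hwy k i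
    rw [Real.dist_eq, abs_le] at a a'
    rw [abs_le] at b b'
    simp only [y] at b b'
    by_contra hne
    have hne' : (j i : ℕ) ≠ (k i : ℕ) := fun h => hne (Fin.ext h)
    rcases lt_or_gt_of_ne hne' with h | h
    · have h' : ((j i : ℕ) : ℝ) + 1 ≤ ((k i : ℕ) : ℝ) := by exact_mod_cast h
      nlinarith
    · have h' : ((k i : ℕ) : ℝ) + 1 ≤ ((j i : ℕ) : ℝ) := by exact_mod_cast h
      nlinarith
  have hmain : ∑ _k : Fin n → Fin N, ENNReal.ofReal (C₀⁻¹ * (t / 10) ^ d)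
      ≤ ENNReal.ofReal (C₀ * r ^ d) := by
    calc _ ≤ ∑ k : Fin n → Fin N, μH[d] (closedBall (w k) (t / 10) ∩ S) :=
          Finset.sum_le_sum fun k _ =>
            (hreg (w k) (hwS k) (t / 10) (by positivity) (by linarith)).1
      _ = μH[d] (⋃ k, closedBall (w k) (t / 10) ∩ S) := by
          rw [measure_iUnion hdisj
            (fun k => (isClosed_closedBall.inter hcl).measurableSet), tsum_fintype]
      _ ≤ μH[d] (closedBall (w k0) r ∩ S) := measure_mono hsub
      _ ≤ _ := (hreg (w k0) (hwS k0) r hr hr1).2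
  rw [← ENNReal.ofReal_sum_of_nonneg (fun _ _ => by positivity),
    ENNReal.ofReal_le_ofReal_iff (by positivity)] at hmain
  simp only [Finset.sum_const, Finset.card_univ, Fintype.card_pi, Fintype.card_fin,
    Finset.prod_const, nsmul_eq_mul, Nat.cast_pow] at hmain
  rw [Real.rpow_sub hN0, Real.rpow_natCast, lt_div_iff₀ (by positivity)] at hN
  have e : (t / 10) ^ d = r ^ d / (N ^ d * 10 ^ d) := by
    rw [ht, div_div, Real.div_rpow hr.le (by positivity),
      Real.mul_rpow hN0.le (by norm_num)]
  rw [e] at hmain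
  have hrd : 0 < r ^ d := by positivity
  have hNd : 0 < (N : ℝ) ^ d := by positivity
  have hTd : 0 < (10 : ℝ) ^ d := by positivity
  have e2 : (N : ℝ) ^ n * (C₀⁻¹ * (r ^ d / (N ^ d * 10 ^ d)))
      = (N ^ n * r ^ d) / (C₀ * (N ^ d * 10 ^ d)) := by field_simp
  rw [e2, div_le_iff₀ (by positivity)] at hmain
  nlinarith [mul_lt_mul_of_pos_right hN hrd]
end
end
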